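/- Let Σ be a finite alphabet, n : Σ → ℕ a frame defined on all of Σ, and p, p' ∈ PBA_n. For any (n,p)-uniform string s : {1,…,2^{M_n}} → Σ, there exist an (n,p')-uniform string s' : {1,…,2^{M_n}} → Σ, a k ∈ ℕ, and a string t : {1,…,k·2^{M_n}} → Σ such that s →_{n,t} s'. -/

import Mathlib

open scoped Classical

/-- A frame on the alphabet `A`: a positive integer value for each character of a nonempty
subset `supp` of `A`. -/
structure Frame (A : Type*) where
  supp : Finset A
  supp_nonempty : supp.Nonempty
  val : A → ℕ
  val_pos : ∀ a ∈ supp, 1 ≤ val a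

/-- `M_n = max_{σ ∈ Σ_n} (n σ + 5)`. -/
def Frame.M {A : Type*} (F : Frame A) : ℕ := F.supp.sup fun a => F.val a + 5

/-- A (partial) string with characters from `A`: a partial function `ℕ → A`, `none` meaning
"not in the domain". -/
def PStr (A : Type*) := ℕ → Option A

/-- The domain of a string. -/
def PStr.dom {A : Type*} (s : PStr A) : Set ℕ := {i | (s i).isSome}

/-- The set of characters appearing in a string. -/
def PStr.chars {A : Type*} (s : PStr A) : Set A := {σ | ∃ i, s i = some σ}

/-- `max_n I = ⌈(max I) / 2^{M_n}⌉` for the domain `I` of the string `s`. -/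
noncomputable def PStr.maxn {A : Type*} (F : Frame A) (s : PStr A) : ℕ :=
  (sSup s.dom + 2 ^ F.M - 1) / 2 ^ F.M

/-- `s[n,k]`: the restriction of the translate of `s` by `−(k−1)·2^{M_n}` to `{1,…,2^{M_n}}`. -/
def PStr.shift {A : Type*} (F : Frame A) (k : ℕ) (s : PStr A) : PStr A :=
  fun i => if 1 ≤ i ∧ i ≤ 2 ^ F.M then s (i + (k - 1) * 2 ^ F.M) else none

/-- `MaxGap(s,σ)` (in `ℕ∞`): the sup of all `m ≥ 1` such that for some `k` with
`k, k+m` in the domain, `σ` does not occur strictly between `k` and `k+m`. -/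
noncomputable def PStr.maxGap {A : Type*} (s : PStr A) (σ : A) : ℕ∞ :=
  sSup ((fun m : ℕ => (m : ℕ∞)) ''
    {m | 1 ≤ m ∧ ∃ k : ℕ, k ∈ s.dom ∧ k + m ∈ s.dom ∧
      ∀ i ∈ s.dom, k < i → i < k + m → s i ≠ some σ})

/-- `MinGap(s,σ)` (in `ℕ∞`): the inf of all `m ≥ 1` with `s k = s (k+m) = σ` for some `k`. -/
noncomputable def PStr.minGap {A : Type*} (s : PStr A) (σ : A) : ℕ∞ :=
  sInf ((fun m : ℕ => (m : ℕ∞)) ''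
    {m | 1 ≤ m ∧ ∃ k : ℕ, s k = some σ ∧ s (k + m) = some σ})

/-- `s` is locally `n`-compatible: for every `σ ∈ Σ_n` appearing in `s`,
`2^{n σ − 1} ≤ MinGap(s,σ) ≤ MaxGap(s,σ) ≤ 2^{n σ}`. -/
def PStr.LocallyCompatible {A : Type*} (F : Frame A) (s : PStr A) : Prop :=
  ∀ σ ∈ F.supp, σ ∈ s.chars →
    (2 ^ (F.val σ - 1) : ℕ∞) ≤ s.minGap σ ∧ s.minGap σ ≤ s.maxGap σ ∧
      s.maxGap σ ≤ (2 ^ F.val σ : ℕ∞)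

/-- `s` is `n`-compatible: for every `σ ∈ Σ_n`,
`2^{n σ − 1} ≤ MinGap(s,σ) ≤ MaxGap(s,σ) ≤ 2^{n σ}`. -/
def PStr.Compatible {A : Type*} (F : Frame A) (s : PStr A) : Prop :=
  ∀ σ ∈ F.supp,
    (2 ^ (F.val σ - 1) : ℕ∞) ≤ s.minGap σ ∧ s.minGap σ ≤ s.maxGap σ ∧
      s.maxGap σ ≤ (2 ^ F.val σ : ℕ∞)

/-- `s ∨ t`: the common extension of strings with disjoint domains. -/
def PStr.join {A : Type*} (s t : PStr A) : PStr A :=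
  fun i => (s i).orElse fun _ => t i

/-- The translate `arr s m` of `s` by `m ≥ 0`. -/
def PStr.translate {A : Type*} (m : ℕ) (s : PStr A) : PStr A :=
  fun i => if m ≤ i then s (i - m) else none

/-- The restriction of `s` to a set of positions. -/
noncomputable def PStr.restrict {A : Type*} (s : PStr A) (I : Set ℕ) : PStr A :=
  fun i => if i ∈ I then s i else none

/-- The `n`-concatenation `s ∧_n t`. -/
noncomputable def PStr.concatN {A : Type*} (F : Frame A) (s t : PStr A) : PStr A :=
  s.join (PStr.translate (s.maxn F * 2 ^ F.M) t)

/-- `s ⋄_n t`: glueing overlapping strings (assuming `s[n,−1] = t[n,+1]`). -/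
noncomputable def PStr.diamondN {A : Type*} (F : Frame A) (s t : PStr A) : PStr A :=
  PStr.concatN F (s.restrict (Set.Icc 1 ((s.maxn F - 1) * 2 ^ F.M))) t

/-- `s →_{n,t} s'`: `t` is a locally `n`-compatible connecting string from `s` to `s'`,
i.e. `Σ_t = Σ_s = Σ_{s'}`, `t[n,+1] = s` and `t[n,−1] = s'`. -/
def PStr.StrArrow {A : Type*} (F : Frame A) (s s' t : PStr A) : Prop :=
  t.chars = s.chars ∧ s.chars = s'.chars ∧ t.LocallyCompatible F ∧
    t.shift F 1 = s ∧ t.shift F (t.maxn F) = s'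

/-- `p` is a probability distribution on the finite alphabet `A`. -/
def IsProbDist {A : Type*} [Fintype A] (p : A → ℝ) : Prop :=
  (∀ σ, 0 ≤ p σ) ∧ ∑ σ, p σ = 1

/-- `x` is one of the two binary values `2 ^ (−n σ)`, `2 ^ (−(n σ − 1))` allowed at `σ`. -/
def BinaryVal {A : Type*} (n : A → ℕ) (σ : A) (x : ℝ) : Prop :=
  x = (2 : ℝ) ^ (-(n σ : ℤ)) ∨ x = (2 : ℝ) ^ (-((n σ : ℤ) - 1))

/-- `Π_n`: probability distributions `p` with `2^(−n σ) ≤ p σ ≤ 2^(−(n σ −1))` for all `σ`. -/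
def PiN {A : Type*} [Fintype A] (n : A → ℕ) : Set (A → ℝ) :=
  {p | IsProbDist p ∧
    ∀ σ, (2 : ℝ) ^ (-(n σ : ℤ)) ≤ p σ ∧ p σ ≤ (2 : ℝ) ^ (-((n σ : ℤ) - 1))}

/-- `PBA_n`: pseudo-binary approximations for the frame `n`. -/
def PBA {A : Type*} [Fintype A] (n : A → ℕ) : Set (A → ℝ) :=
  {p | p ∈ PiN n ∧
    ∀ σ τ : A, ¬ BinaryVal n σ (p σ) → ¬ BinaryVal n τ (p τ) → σ = τ}

/-- `J` is an `N`-saturated arithmetic progression in `{1,…,2^N}` with common difference `D`: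
`D = 2^j` for some `j ≤ N`, and `J` consists of all elements of `{1,…,2^N}` congruent to its
first element `r ∈ {1,…,D}` modulo `D`. -/
def IsSatAP (N : ℕ) (J : Set ℕ) (D : ℕ) : Prop :=
  (∃ j : ℕ, j ≤ N ∧ D = 2 ^ j) ∧
  ∃ r : ℕ, 1 ≤ r ∧ r ≤ D ∧ J = {x | ∃ m : ℕ, m < 2 ^ N / D ∧ x = r + m * D}

/-- `s` is an `(n,p)`-uniform string on `{1,…,2^{M_n}}`: its density function is `p`, and for
every `σ ∈ Σ_n` the occurrence set of `σ` is sandwiched between saturated arithmetic progressions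
with common differences `2^{n σ}` and `2^{n σ − 1}`. -/
def PStr.Uniform {A : Type*} [Fintype A] (F : Frame A) (p : A → ℝ) (s : PStr A) : Prop :=
  s.dom = Set.Icc 1 (2 ^ F.M) ∧
  (∀ σ : A, ({i : ℕ | s i = some σ}.ncard : ℝ) = p σ * 2 ^ F.M) ∧
  ∀ σ ∈ F.supp, ∃ J₁ J₂ : Set ℕ,
    IsSatAP F.M J₁ (2 ^ F.val σ) ∧ IsSatAP F.M J₂ (2 ^ (F.val σ - 1)) ∧
    J₁ ⊆ {i : ℕ | s i = some σ} ∧ {i : ℕ | s i = some σ} ⊆ J₂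

/-!
Finite uniform strings are extended to bi-infinite strings of period `2 ^ M`, so that the
occurrences of every letter lie between two residue classes modulo powers of two. If residue classes
are rotated or interchanged from some time `T` on, all gaps stay within their bounds, provided that
near `T` the surplus occurrences of the displaced letters are overwritten by a filler letter. As
long as all letters but `x` and `y` have extreme frequencies, such moves align a surplus occurrence
of `x` with the progression of `y`, and it can then be turned into an occurrence of `y`. Iterating
this transfers mass from `x` to `y` until one of them is extreme as well, and a sequence of
transfers leads from any pseudo-binary distribution to any other one. The resulting bi-infinite
string is periodic near both ends, and `t` is a sufficiently long window of it.
-/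

open Filter Function

section Congruences

variable {k : ℕ} {a b c d : ℤ}

theorem modEq_two_pow_of_le {j : ℕ} (h : a ≡ b [ZMOD 2 ^ k]) (hjk : j ≤ k) :
    a ≡ b [ZMOD 2 ^ j] :=
  h.of_dvd (pow_dvd_pow 2 hjk)

theorem modEq_of_sub_eq {n : ℤ} (h : a ≡ b [ZMOD n]) (he : c - d = a - b) : c ≡ d [ZMOD n] := by
  rw [Int.modEq_comm, Int.modEq_iff_dvd] at h ⊢
  rwa [he]

theorem add_two_pow_modEq {j : ℕ} (a : ℤ) (hjk : j ≤ k) : a + 2 ^ k ≡ a [ZMOD 2 ^ j] := by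
  simpa using ((Int.modEq_zero_iff_dvd.2 (pow_dvd_pow (2 : ℤ) hjk)).add_left a)

theorem add_le_of_modEq_of_lt {n : ℤ} (h : a ≡ b [ZMOD n]) (hlt : a < b) : a + n ≤ b := by
  linarith [Int.le_of_dvd (sub_pos.2 hlt) h.dvd]

theorem eq_of_modEq_of_mem_Ico {n : ℤ} (h : a ≡ b [ZMOD n]) (ha : a ∈ Set.Ico c (c + n))
    (hb : b ∈ Set.Ico c (c + n)) : a = b := by
  rcases lt_trichotomy a b with hlt | heq | hlt
  · linarith [add_le_of_modEq_of_lt h hlt, ha.1, hb.2]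
  · exact heq
  · linarith [add_le_of_modEq_of_lt h.symm hlt, hb.1, ha.2]

theorem not_add_modEq_self {n : ℤ} (hd : 0 < d) (hdn : d < n) : ¬ a + d ≡ a [ZMOD n] := fun h => by
  linarith [add_le_of_modEq_of_lt h.symm (by linarith)]

theorem modEq_two_pow_succ_or (h : a ≡ b [ZMOD 2 ^ k]) :
    a ≡ b [ZMOD 2 ^ (k + 1)] ∨ a ≡ b + 2 ^ k [ZMOD 2 ^ (k + 1)] := by
  obtain ⟨c, hc⟩ := h.symm.dvd
  rcases Int.even_or_odd' c with ⟨e, rfl | rfl⟩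
  · exact .inl (Int.modEq_iff_dvd.2 ⟨-e, by rw [pow_succ]; linear_combination -hc⟩)
  · exact .inr (Int.modEq_iff_dvd.2 ⟨-e, by rw [pow_succ]; linear_combination -hc⟩)

theorem not_add_two_pow_modEq_self : ¬ a + 2 ^ k ≡ a [ZMOD 2 ^ (k + 1)] :=
  not_add_modEq_self (by positivity) (pow_lt_pow_right₀ one_lt_two k.lt_succ_self)

theorem exists_modEq_mem_Ico {n : ℤ} (hn : 0 < n) (r t : ℤ) :
    ∃ t' ∈ Set.Ico t (t + n), t' ≡ r [ZMOD n] :=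
  ⟨t + (r - t) % n, ⟨by linarith [Int.emod_nonneg (r - t) hn.ne'],
    by linarith [Int.emod_lt_of_pos (r - t) hn]⟩,
    by simpa using (Int.mod_modEq (r - t) n).add_left t⟩

theorem periodic_modEq {n P r : ℤ} (hn : n ∣ P) : Periodic (· ≡ r [ZMOD n]) P := fun t => by
  have : t + P ≡ t [ZMOD n] := by simpa using (Int.modEq_zero_iff_dvd.2 hn).add_left t
  exact propext ⟨this.symm.trans, this.trans⟩

end Congruences

section Strings

variable {A : Type*} {k : ℕ} {σ : A} {s s' W : ℤ → A} {r : ℤ}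

/-- Consecutive occurrences of the letter `σ` in the bi-infinite string `s` are at distance between
`2 ^ k` and `2 ^ (k + 1)`. This is local compatibility for a letter of frame value `k + 1`. -/
structure GapBounded (k : ℕ) (σ : A) (s : ℤ → A) : Prop where
  le_sub : ∀ ⦃t t' : ℤ⦄, s t = σ → s t' = σ → t < t' → (2 : ℤ) ^ k ≤ t' - t
  exists_mem_Ico : ∀ t : ℤ, ∃ t' ∈ Set.Ico t (t + 2 ^ (k + 1)), s t' = σ

/-- The occurrences of `σ` in `s` lie between the class of `r` modulo `2 ^ (k + 1)` and the class of
`r` modulo `2 ^ k`. This is uniformity for a letter of frame value `k + 1`. -/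
structure Sandwiched (k : ℕ) (σ : A) (s : ℤ → A) (r : ℤ) : Prop where
  eq_of_modEq : ∀ ⦃t : ℤ⦄, t ≡ r [ZMOD 2 ^ (k + 1)] → s t = σ
  modEq_of_eq : ∀ ⦃t : ℤ⦄, s t = σ → t ≡ r [ZMOD 2 ^ k]

theorem Sandwiched.gapBounded (h : Sandwiched k σ s r) : GapBounded k σ s where
  le_sub t t' ht ht' hlt := by
    linarith [add_le_of_modEq_of_lt ((h.modEq_of_eq ht).trans (h.modEq_of_eq ht').symm) hlt]
  exists_mem_Ico t := by
    obtain ⟨t', ht', hmod⟩ := exists_modEq_mem_Ico (n := 2 ^ (k + 1)) (by positivity) r t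
    exact ⟨t', ht', h.eq_of_modEq hmod⟩

theorem GapBounded.comp_sub (h : GapBounded k σ s) (d : ℤ) :
    GapBounded k σ fun t => s (t - d) where
  le_sub t t' ht ht' hlt := by linarith [h.le_sub ht ht' (by linarith)]
  exists_mem_Ico t := by
    obtain ⟨t', ⟨h₁, h₂⟩, ht'⟩ := h.exists_mem_Ico (t - d)
    exact ⟨t' + d, ⟨by linarith, by linarith⟩, by simpa using ht'⟩

theorem GapBounded.of_overlap {b c : ℤ} (h : GapBounded k σ s) (h' : GapBounded k σ s')
    (hbc : b + 2 ^ (k + 1) ≤ c) (hW : ∀ t < c, W t = s t) (hW' : ∀ t, b ≤ t → W t = s' t) :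
    GapBounded k σ W where
  le_sub t t' ht ht' hlt := by
    by_cases htb : b ≤ t
    · exact h'.le_sub (hW' t htb ▸ ht) (hW' t' (htb.trans hlt.le) ▸ ht') hlt
    by_cases htc : t' < c
    · exact h.le_sub (hW t (hlt.trans htc) ▸ ht) (hW t' htc ▸ ht') hlt
    · have : (2 : ℤ) ^ k ≤ 2 ^ (k + 1) := pow_le_pow_right₀ one_le_two k.le_succ
      linarith
  exists_mem_Ico t := by
    by_cases htb : b ≤ t
    · obtain ⟨t', hmem, ht'⟩ := h'.exists_mem_Ico t
      exact ⟨t', hmem, hW' t' (htb.trans hmem.1) ▸ ht'⟩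
    · obtain ⟨t', hmem, ht'⟩ := h.exists_mem_Ico t
      exact ⟨t', hmem, hW t' (by linarith [hmem.2]) ▸ ht'⟩

/-- The string that follows `s` before time `T` and `s'` from time `T` on. -/
def glue (T : ℤ) (s s' : ℤ → A) : ℤ → A := fun t => if t < T then s t else s' t

theorem glue_of_lt {T t : ℤ} (h : t < T) : glue T s s' t = s t := if_pos h

theorem glue_of_le {T t : ℤ} (h : T ≤ t) : glue T s s' t = s' t := if_neg h.not_gt

theorem sandwiched_glue (T : ℤ) (h : Sandwiched k σ s r) (h' : Sandwiched k σ s' r) :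
    Sandwiched k σ (glue T s s') r where
  eq_of_modEq t ht := by
    unfold glue
    split_ifs
    exacts [h.eq_of_modEq ht, h'.eq_of_modEq ht]
  modEq_of_eq t ht := by
    unfold glue at ht
    split_ifs at ht
    exacts [h.modEq_of_eq ht, h'.modEq_of_eq ht]

theorem gapBounded_glue {T l f : ℤ} (h : GapBounded k σ s) (h' : GapBounded k σ s')
    (hlT : l < T) (hl : s l = σ) (hlast : ∀ t ∈ Set.Ioo l T, s t ≠ σ)
    (hTf : T ≤ f) (hf : s' f = σ) (hfirst : ∀ t ∈ Set.Ico T f, s' t ≠ σ)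
    (hgap : f - l ∈ Set.Icc ((2 : ℤ) ^ k) (2 ^ (k + 1))) : GapBounded k σ (glue T s s') where
  le_sub t t' ht ht' hlt := by
    rcases lt_or_ge t T with htT | htT <;> rcases lt_or_ge t' T with htT' | htT'
    · rw [glue_of_lt htT] at ht
      rw [glue_of_lt htT'] at ht'
      exact h.le_sub ht ht' hlt
    · rw [glue_of_lt htT] at ht
      rw [glue_of_le htT'] at ht'
      have htl : t ≤ l := not_lt.1 fun hlt => hlast t ⟨hlt, htT⟩ ht
      have hft' : f ≤ t' := not_lt.1 fun hlt => hfirst t' ⟨htT', hlt⟩ ht'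
      linarith [hgap.1]
    · exact absurd hlt (htT'.trans_le htT).not_gt
    · rw [glue_of_le htT] at ht
      rw [glue_of_le htT'] at ht'
      exact h'.le_sub ht ht' hlt
  exists_mem_Ico t := by
    rcases le_or_gt t l with htl | htl
    · obtain ⟨t', hmem, ht'⟩ := h.exists_mem_Ico t
      by_cases htT' : t' < T
      · exact ⟨t', hmem, (glue_of_lt htT').trans ht'⟩
      · exact ⟨l, ⟨htl, by linarith [hmem.2]⟩, (glue_of_lt hlT).trans hl⟩
    rcases le_or_gt t f with htf | htf
    · exact ⟨f, ⟨htf, by linarith [hgap.2]⟩, (glue_of_le hTf).trans hf⟩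
    · obtain ⟨t', hmem, ht'⟩ := h'.exists_mem_Ico t
      exact ⟨t', hmem, (glue_of_le (by linarith [hmem.1])).trans ht'⟩

/-- Some bi-infinite string obeying all gap bounds starts as `s` and ends as `s'`. -/
def Connected (m : A → ℕ) (s s' : ℤ → A) : Prop :=
  ∃ W : ℤ → A, (∀ σ, GapBounded (m σ) σ W) ∧ W =ᶠ[atBot] s ∧ W =ᶠ[atTop] s'

theorem Connected.of_glue {m : A → ℕ} (T : ℤ)
    (h : ∀ σ, GapBounded (m σ) σ (glue T s s')) : Connected m s s' :=
  ⟨glue T s s', h, (eventually_lt_atBot T).mono fun _ => glue_of_lt,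
    (eventually_ge_atTop T).mono fun _ => glue_of_le⟩

theorem Connected.exists_eq_of_lt {m : A → ℕ} {P : ℤ} (h : Connected m s s') (hP : 0 < P)
    (hs : Periodic s P) (hs' : Periodic s' P) (c : ℤ) :
    ∃ W : ℤ → A, (∀ σ, GapBounded (m σ) σ W) ∧ (∀ t < c, W t = s t) ∧ W =ᶠ[atTop] s' := by
  obtain ⟨W, hgap, hbot, htop⟩ := h
  obtain ⟨a, ha⟩ := eventually_atBot.1 hbot
  obtain ⟨b, hb⟩ := eventually_atTop.1 htop
  have hshift : c - |c - a| * P ≤ a := by nlinarith [le_abs_self (c - a), abs_nonneg (c - a)]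
  refine ⟨fun t => W (t - |c - a| * P), fun σ => (hgap σ).comp_sub _, fun t ht => ?_, ?_⟩
  · exact (ha _ (by linarith)).trans (hs.sub_zsmul_eq _)
  · filter_upwards [eventually_ge_atTop (b + |c - a| * P)] with t ht
    exact (hb _ (by linarith)).trans (hs'.sub_zsmul_eq _)

theorem Connected.trans {m : A → ℕ} {s'' : ℤ → A} {P : ℤ} (hP : ∀ σ, (2 : ℤ) ^ (m σ + 1) ≤ P)
    (hs' : Periodic s' P) (hs'' : Periodic s'' P) (h : Connected m s s')
    (h' : Connected m s' s'') : Connected m s s'' := by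
  have hP0 : 0 < P := lt_of_lt_of_le (by positivity) (hP (s 0))
  obtain ⟨W, hgap, hbot, htop⟩ := h
  obtain ⟨b, hb⟩ := eventually_atTop.1 htop
  obtain ⟨W', hgap', hW', htop'⟩ := h'.exists_eq_of_lt hP0 hs' hs'' (b + P)
  refine ⟨glue (b + P) W W', fun σ => ?_, ?_, ?_⟩
  · refine (hgap σ).of_overlap (hgap' σ) (add_le_add_right (hP σ) b) (fun t => glue_of_lt)
      fun t ht => ?_
    rcases lt_or_ge t (b + P) with htc | htc
    · rw [glue_of_lt htc, hb t ht, hW' t htc]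
    · exact glue_of_le htc
  · filter_upwards [hbot, eventually_lt_atBot (b + P)] with t ht htc
    rw [glue_of_lt htc, ht]
  · filter_upwards [htop', eventually_ge_atTop (b + P)] with t ht htc
    rw [glue_of_le htc, ht]

end Strings

section Bases

variable {A : Type*} {m : A → ℕ} {s s' : ℤ → A} {ρ : A → ℤ} {D : Set ℤ} {φ : A} {p q : ℤ}

/-- The bi-infinite counterpart of a uniform string: `ρ σ` is an occurrence around which `σ` is
sandwiched. The class of `ρ σ` modulo `2 ^ (m σ + 1)` is called the base progression of `σ`. -/
def IsBase (m : A → ℕ) (s : ℤ → A) (ρ : A → ℤ) : Prop :=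
  ∀ σ, Sandwiched (m σ) σ s (ρ σ)

/-- The position `t` lies outside the base progression of the letter standing there. -/
def IsExtra (m : A → ℕ) (s : ℤ → A) (ρ : A → ℤ) (t : ℤ) : Prop :=
  ¬ t ≡ ρ (s t) [ZMOD 2 ^ (m (s t) + 1)]

theorem IsBase.apply_base (h : IsBase m s ρ) (σ : A) : s (ρ σ) = σ :=
  (h σ).eq_of_modEq rfl

theorem IsBase.not_isExtra_base (h : IsBase m s ρ) (σ : A) : ¬ IsExtra m s ρ (ρ σ) := by
  rw [IsExtra, h.apply_base, not_not]

theorem IsBase.modEq (h : IsBase m s ρ) (p : ℤ) : p ≡ ρ (s p) [ZMOD 2 ^ m (s p)] :=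
  (h (s p)).modEq_of_eq rfl

theorem IsBase.connected (h : IsBase m s ρ) (h' : IsBase m s' ρ) : Connected m s s' :=
  .of_glue 0 fun σ => (sandwiched_glue 0 (h σ) (h' σ)).gapBounded

theorem IsExtra.modEq_add (hp : IsExtra m s ρ p) (h : IsBase m s ρ) :
    p ≡ ρ (s p) + 2 ^ m (s p) [ZMOD 2 ^ (m (s p) + 1)] :=
  (modEq_two_pow_succ_or (h.modEq p)).resolve_left hp

theorem IsExtra.modEq_of_eq (hp : IsExtra m s ρ p) (hq : IsExtra m s ρ q) (h : IsBase m s ρ)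
    (hpq : s p = s q) : p ≡ q [ZMOD 2 ^ (m (s q) + 1)] := by
  have hp' := hp.modEq_add h
  rw [hpq] at hp'
  exact hp'.trans (hq.modEq_add h).symm

theorem IsBase.isExtra_of_mem_Ioo {l : ℤ} (h : IsBase m s ρ)
    (hl : l ≡ ρ (s p) [ZMOD 2 ^ (m (s p) + 1)])
    (hp : p ∈ Set.Ioo l (l + 2 ^ (m (s p) + 1))) : IsExtra m s ρ p ∧ p = l + 2 ^ m (s p) := by
  have hext : IsExtra m s ρ p := fun hbase =>
    hp.1.ne' (eq_of_modEq_of_mem_Ico (hbase.trans hl.symm) (Set.Ioo_subset_Ico_self hp)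
      ⟨le_rfl, by linarith [hp.1, hp.2]⟩)
  refine ⟨hext, eq_of_modEq_of_mem_Ico ((hext.modEq_add h).trans (hl.symm.add_right _))
    (Set.Ioo_subset_Ico_self hp) ⟨by simp, ?_⟩⟩
  gcongr <;> simp

theorem IsExtra.of_modEq (hp : IsExtra m s ρ p) (hqp : q ≡ p [ZMOD 2 ^ (m (s p) + 1)])
    (hs : s q = s p) : IsExtra m s ρ q := fun hq => hp <| hqp.symm.trans (hs ▸ hq)

/-- Write the letter `φ` on all extra positions lying in `D`. -/
noncomputable def donate (m : A → ℕ) (s : ℤ → A) (ρ : A → ℤ) (D : Set ℤ) (φ : A) : ℤ → A :=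
  fun t => if t ∈ D ∧ IsExtra m s ρ t then φ else s t

theorem donate_of_not_isExtra (h : ¬ IsExtra m s ρ p) : donate m s ρ D φ p = s p :=
  if_neg fun h' => h h'.2

theorem donate_eq_iff_of_ne {w : A} (hw : w ≠ φ) :
    donate m s ρ D φ p = w ↔ s p = w ∧ ¬ (p ∈ D ∧ IsExtra m s ρ p) := by
  unfold donate
  split_ifs with hp
  · simp [hp, hw.symm]
  · simp [hp]

theorem isBase_donate (hbase : ∀ σ t, t ≡ ρ σ [ZMOD 2 ^ (m σ + 1)] → s t = σ)
    (hocc : ∀ t, t ∈ D ∨ t ≡ ρ (s t) [ZMOD 2 ^ m (s t)])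
    (hD : ∀ t ∈ D, t ≡ ρ φ [ZMOD 2 ^ m φ]) : IsBase m (donate m s ρ D φ) ρ := fun σ => by
  refine ⟨fun t ht => ?_, fun t ht => ?_⟩
  · obtain rfl := hbase σ t ht
    exact donate_of_not_isExtra (not_not.2 ht)
  · unfold donate at ht
    split_ifs at ht with hp
    · exact ht ▸ hD t hp.1
    · subst ht
      rcases hocc t with htD | ht
      · exact modEq_two_pow_of_le (not_not.1 fun hext => hp ⟨htD, hext⟩) (Nat.le_succ _)
      · exact ht

theorem IsBase.donate (h : IsBase m s ρ) (hD : ∀ t ∈ D, t ≡ ρ φ [ZMOD 2 ^ m φ]) :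
    IsBase m (donate m s ρ D φ) ρ :=
  isBase_donate (fun σ _ ht => (h σ).eq_of_modEq ht) (fun t => .inr (h.modEq t)) hD

theorem periodic_donate {P : ℤ} (hs : Periodic s P) (hP : ∀ σ, (2 : ℤ) ^ (m σ + 1) ∣ P)
    (hD : Periodic (· ∈ D) P) : Periodic (donate m s ρ D φ) P := fun t => by
  have hadd : t + P ≡ t [ZMOD 2 ^ (m (s t) + 1)] := by
    simpa using (Int.modEq_zero_iff_dvd.2 (hP (s t))).add_left t
  have hext : IsExtra m s ρ (t + P) ↔ IsExtra m s ρ t := by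
    rw [IsExtra, IsExtra, hs t]
    exact not_congr ⟨hadd.symm.trans, hadd.trans⟩
  have hmem : t + P ∈ D ↔ t ∈ D := iff_of_eq (hD t)
  simp only [_root_.donate, hext, hmem, hs t]

end Bases

section Rearrangements

variable {A : Type*} {m : A → ℕ} {s : ℤ → A} {ρ : A → ℤ} {e : Equiv.Perm ℤ} {D D' E : Set ℤ}
  {φ : A} {T p : ℤ}

/-- Conditions under which the letters of `s` may be moved along the permutation `e`, which moves
the base progression of `w` down by `ρ w - e (ρ w)`. The transition happens at time `T`, during
which the letter `φ` fills in for the extra letters on `D`; at the end it still does so on `D'`. -/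
structure IsRearrangement (m : A → ℕ) (s : ℤ → A) (ρ : A → ℤ) (e : Equiv.Perm ℤ) (D D' : Set ℤ)
    (φ : A) (T : ℤ) : Prop where
  isBase : IsBase m s ρ
  shift_mem : ∀ w, ρ w - e (ρ w) ∈ Set.Icc (0 : ℤ) (2 ^ m w)
  filler_fixed : e (ρ φ) = ρ φ
  subset : D' ⊆ D
  modEq_filler : ∀ t ∈ D, t ≡ ρ φ [ZMOD 2 ^ m φ]
  apply_eq : ∀ p, e p = p - (ρ (s p) - e (ρ (s p))) ∨ IsExtra m s ρ p ∧ e p ∈ D'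
  isExtra_of_cross : ∀ p, T ≤ p → e p < T → IsExtra m s ρ p
  extra_mem : ∀ p, IsExtra m s ρ p → e (ρ (s p)) ≠ ρ (s p) →
    e p ∈ D ∧ p ∉ Set.Ico (T - 2 ^ m (s p)) T ∨ p ∈ D ∧ e p ∉ Set.Ico T (T + 2 ^ m (s p))

namespace IsRearrangement

theorem ne_filler (h : IsRearrangement m s ρ e D D' φ T) {w : A} (hw : e (ρ w) ≠ ρ w) :
    w ≠ φ := by
  rintro rfl
  exact hw h.filler_fixed

theorem apply_of_not_isExtra (h : IsRearrangement m s ρ e D D' φ T) (hp : ¬ IsExtra m s ρ p) :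
    e p = p - (ρ (s p) - e (ρ (s p))) :=
  (h.apply_eq p).resolve_right fun h' => hp h'.1

theorem exists_base_of_modEq (h : IsRearrangement m s ρ e D D' φ T) {w : A} {t : ℤ}
    (ht : t ≡ e (ρ w) [ZMOD 2 ^ (m w + 1)]) : ∃ p, e p = t ∧ s p = w ∧ ¬ IsExtra m s ρ p := by
  have hp : t + (ρ w - e (ρ w)) ≡ ρ w [ZMOD 2 ^ (m w + 1)] := by
    simpa using ht.add_right (ρ w - e (ρ w))
  have hsp := (h.isBase w).eq_of_modEq hp
  have hext : ¬ IsExtra m s ρ (t + (ρ w - e (ρ w))) := by rwa [IsExtra, hsp, not_not]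
  refine ⟨_, ?_, hsp, hext⟩
  rw [h.apply_of_not_isExtra hext, hsp, add_sub_cancel_right]

theorem isExtra_apply_iff (h : IsRearrangement m s ρ e D D' φ T) :
    IsExtra m (s ∘ e.symm) (e ∘ ρ) (e p) ↔ IsExtra m s ρ p := by
  simp only [IsExtra, comp_apply, e.symm_apply_apply]
  refine not_congr ⟨fun hmod => ?_, fun hmod => ?_⟩
  · obtain ⟨q, hq, -, hext⟩ := h.exists_base_of_modEq hmod
    exact e.injective hq ▸ not_not.1 hext
  · rw [h.apply_of_not_isExtra (not_not.2 hmod)]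
    simpa using hmod.sub_right (ρ (s p) - e (ρ (s p)))

theorem isBase_donate (h : IsRearrangement m s ρ e D D' φ T) (hE : D' ⊆ E) (hED : E ⊆ D) :
    IsBase m (donate m (s ∘ e.symm) (e ∘ ρ) E φ) (e ∘ ρ) := by
  refine _root_.isBase_donate (fun w t ht => ?_) (fun t => ?_) fun t ht => ?_
  · obtain ⟨p, rfl, hsp, -⟩ := h.exists_base_of_modEq ht
    rwa [comp_apply, e.symm_apply_apply]
  · obtain ⟨p, rfl⟩ := e.surjective t
    simp only [comp_apply, e.symm_apply_apply]
    rcases h.apply_eq p with hp | hp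
    · rw [hp]
      exact .inr (by simpa using (h.isBase.modEq p).sub_right (ρ (s p) - e (ρ (s p))))
    · exact .inl (hE hp.2)
  · simpa only [comp_apply, h.filler_fixed] using h.modEq_filler t (hED ht)

theorem apply_next_base (h : IsRearrangement m s ρ e D D' φ T) {w : A} {l : ℤ}
    (hl : l ≡ ρ w [ZMOD 2 ^ (m w + 1)]) :
    e (l + 2 ^ (m w + 1)) = l + 2 ^ (m w + 1) - (ρ w - e (ρ w)) := by
  have hnext : l + 2 ^ (m w + 1) ≡ ρ w [ZMOD 2 ^ (m w + 1)] :=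
    (add_two_pow_modEq l le_rfl).trans hl
  have hs := (h.isBase w).eq_of_modEq hnext
  rw [h.apply_of_not_isExtra (by rwa [IsExtra, hs, not_not]), hs]

theorem donate_ne_of_mem_Ioo (h : IsRearrangement m s ρ e D D' φ T) {w : A} {l t : ℤ}
    (hw : e (ρ w) ≠ ρ w) (hl : l ≡ ρ w [ZMOD 2 ^ (m w + 1)]) (ht : t ∈ Set.Ioo l T)
    (hle : T ≤ l + 2 ^ (m w + 1)) : donate m s ρ D φ t ≠ w := fun htw => by
  rw [donate_eq_iff_of_ne (h.ne_filler hw)] at htw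
  obtain ⟨rfl, hD⟩ := htw
  obtain ⟨hext, htl⟩ := h.isBase.isExtra_of_mem_Ioo hl ⟨ht.1, ht.2.trans_le hle⟩
  rcases h.extra_mem _ hext hw with ⟨-, hwindow⟩ | ⟨hmem, -⟩
  · exact hwindow ⟨by linarith [pow_succ' (2 : ℤ) (m (s t))], ht.2⟩
  · exact hD ⟨hmem, hext⟩

theorem donate_comp_ne_of_mem_Ico (h : IsRearrangement m s ρ e D D' φ T) {w : A} {l t : ℤ}
    (hw : e (ρ w) ≠ ρ w) (hl : l ≡ ρ w [ZMOD 2 ^ (m w + 1)]) (hlT : l < T)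
    (ht : t ∈ Set.Ico T (l + 2 ^ (m w + 1) - (ρ w - e (ρ w)))) :
    donate m (s ∘ e.symm) (e ∘ ρ) D φ t ≠ w := fun htw => by
  obtain ⟨p, rfl⟩ := e.surjective t
  rw [donate_eq_iff_of_ne (h.ne_filler hw), h.isExtra_apply_iff,
    comp_apply, e.symm_apply_apply] at htw
  obtain ⟨rfl, hD⟩ := htw
  have hp : e p = p - (ρ (s p) - e (ρ (s p))) :=
    (h.apply_eq p).resolve_right fun h' => hD ⟨h.subset h'.2, h'.1⟩
  have hδ := (h.shift_mem (s p)).1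
  obtain ⟨hext, hpl⟩ := h.isBase.isExtra_of_mem_Ioo hl ⟨by linarith [ht.1], by linarith [ht.2]⟩
  rcases h.extra_mem _ hext hw with ⟨hmem, -⟩ | ⟨-, hwindow⟩
  · exact hD ⟨hmem, hext⟩
  · exact hwindow ⟨ht.1, by linarith⟩

/-- An extra letter on a displaced strand is overwritten by `φ` on one side of `T`, and lies far
from `T` on the other; hence gaps across `T` only involve base progressions. -/
theorem gapBounded_glue_donate (h : IsRearrangement m s ρ e D D' φ T) (w : A) :
    GapBounded (m w) w
      (glue T (donate m s ρ D φ) (donate m (s ∘ e.symm) (e ∘ ρ) D φ)) := by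
  have h₁ : IsBase m (donate m s ρ D φ) ρ := h.isBase.donate h.modEq_filler
  have h₂ := h.isBase_donate h.subset subset_rfl
  by_cases hw : e (ρ w) = ρ w
  · have h₂w := h₂ w
    rw [comp_apply, hw] at h₂w
    exact (sandwiched_glue T (h₁ w) h₂w).gapBounded
  obtain ⟨hδ₀, hδ₁⟩ := h.shift_mem w
  obtain ⟨l, ⟨hl₀, hl₁⟩, hl⟩ :=
    exists_modEq_mem_Ico (n := 2 ^ (m w + 1)) (by positivity) (ρ w) (T - 2 ^ (m w + 1))
  rw [sub_add_cancel] at hl₁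
  have hle : T ≤ l + 2 ^ (m w + 1) := by linarith
  have hf := h.apply_next_base hl
  have hpow : (2 : ℤ) ^ (m w + 1) = 2 * 2 ^ m w := pow_succ' 2 (m w)
  have hnext : l + 2 ^ (m w + 1) ≡ ρ w [ZMOD 2 ^ (m w + 1)] :=
    (add_two_pow_modEq l le_rfl).trans hl
  refine gapBounded_glue (l := l) (f := e (l + 2 ^ (m w + 1))) (h₁ w).gapBounded
    (h₂ w).gapBounded hl₁ ((h₁ w).eq_of_modEq hl)
    (fun t ht => h.donate_ne_of_mem_Ioo hw hl ht hle) ?_ ?_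
    (fun t ht => h.donate_comp_ne_of_mem_Ico hw hl hl₁ (hf ▸ ht)) ?_
  · exact not_lt.1 fun hlt => h.isExtra_of_cross _ hle hlt
      (by rwa [(h.isBase w).eq_of_modEq hnext])
  · refine (h₂ w).eq_of_modEq ?_
    rw [hf]
    simpa using hnext.sub_right (ρ w - e (ρ w))
  · rw [hf]
    exact ⟨by linarith, by linarith⟩

theorem connected {P : ℤ} (h : IsRearrangement m s ρ e D D' φ T) (hs : Periodic s P)
    (he : ∀ t, e.symm (t + P) = e.symm t + P) (hD : Periodic (· ∈ D) P)
    (hD' : Periodic (· ∈ D') P) (hP₀ : 0 < P) (hP : ∀ σ, (2 : ℤ) ^ (m σ + 1) ∣ P) :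
    Connected m s (donate m (s ∘ e.symm) (e ∘ ρ) D' φ) := by
  have hrot : Periodic (s ∘ e.symm) P := fun t => by rw [comp_apply, he, hs, comp_apply]
  have hP' (σ : A) : (2 : ℤ) ^ (m σ + 1) ≤ P := Int.le_of_dvd hP₀ (hP σ)
  have hS₁ : Periodic (donate m s ρ D φ) P := periodic_donate hs hP hD
  have hS₂ : Periodic (donate m (s ∘ e.symm) (e ∘ ρ) D φ) P := periodic_donate hrot hP hD
  have hS₃ : Periodic (donate m (s ∘ e.symm) (e ∘ ρ) D' φ) P := periodic_donate hrot hP hD'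
  exact ((h.isBase.connected (h.isBase.donate h.modEq_filler)).trans hP' hS₁ hS₂
    (.of_glue T h.gapBounded_glue_donate)).trans hP' hS₂ hS₃
    ((h.isBase_donate h.subset subset_rfl).connected (h.isBase_donate subset_rfl h.subset))

end IsRearrangement

end Rearrangements

section Rotations

variable {n u g h p t P : ℤ}

/-- How far `classRotation` moves the position `p` down. -/
def rotationShift (n u g h p : ℤ) : ℤ :=
  if p ≡ u [ZMOD n] then g
  else if p ≡ u - g [ZMOD n] then n - g - h
  else if p ≡ u + h [ZMOD n] then h
  else 0

/-- How far the inverse of `classRotation` moves the position `t` up. -/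
def rotationUnshift (n u g h t : ℤ) : ℤ :=
  if t ≡ u - g [ZMOD n] then g
  else if t ≡ u + h [ZMOD n] then n - g - h
  else if t ≡ u [ZMOD n] then h
  else 0

theorem not_modEq_sub (hg : 0 < g) (hn : g < n) (hp : p ≡ u [ZMOD n]) : ¬ p ≡ u - g [ZMOD n] :=
  fun hp' => not_add_modEq_self (a := u - g) hg hn (by simpa using hp.symm.trans hp')

theorem add_not_modEq_sub (hg : 0 < g) (hh : 0 ≤ h) (hn : g + h < n) (hp : p ≡ u + h [ZMOD n]) :
    ¬ p ≡ u - g [ZMOD n] := by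
  simpa using not_modEq_sub (g := g + h) (by linarith) hn hp

theorem rotationShift_add_unshift (hg : 0 < g) (hh : 0 ≤ h) (hn : g + h < n) (t : ℤ) :
    rotationShift n u g h (t + rotationUnshift n u g h t) = rotationUnshift n u g h t := by
  have hgn : g < n := by linarith
  unfold rotationUnshift
  split_ifs with hq hv hu
  · exact if_pos (by simpa using hq.add_right g)
  · have hq' : t + (n - g - h) ≡ u - g [ZMOD n] :=
      modEq_of_sub_eq (Int.add_modulus_modEq_iff.2 hv) (by ring)
    exact (if_neg fun hu' => not_modEq_sub hg hgn hu' hq').trans (if_pos hq')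
  · have hv' : t + h ≡ u + h [ZMOD n] := hu.add_right h
    exact (if_neg fun hu' => hv (hu.trans (hu'.symm.trans hv'))).trans
      ((if_neg (add_not_modEq_sub hg hh hn hv')).trans (if_pos hv'))
  · simp only [rotationShift, add_zero, hu, hq, hv, if_false]

theorem rotationUnshift_sub_shift (hg : 0 < g) (hh : 0 ≤ h) (hn : g + h < n) (p : ℤ) :
    rotationUnshift n u g h (p - rotationShift n u g h p) = rotationShift n u g h p := by
  have hgn : g < n := by linarith
  unfold rotationShift
  split_ifs with hu hq hv
  · exact if_pos (hu.sub_right g)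
  · have hv' : p - (n - g - h) ≡ u + h [ZMOD n] :=
      modEq_of_sub_eq (Int.sub_modulus_modEq_iff.2 hq) (by ring)
    exact (if_neg (add_not_modEq_sub hg hh hn hv')).trans (if_pos hv')
  · have hu' : p - h ≡ u [ZMOD n] := modEq_of_sub_eq hv (by ring)
    exact (if_neg (not_modEq_sub hg hgn hu')).trans
      ((if_neg fun hv' => hu (hv.trans (hv'.symm.trans hu'))).trans (if_pos hu'))
  · simp only [rotationUnshift, sub_zero, hu, hq, hv, if_false]

/-- The permutation sending every element of the union of the classes of `u`, `u - g` and `u + h`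
modulo `n` to its predecessor in this union. For `h = 0` it interchanges the two classes. -/
def classRotation (u : ℤ) (hg : 0 < g) (hh : 0 ≤ h) (hn : g + h < n) : Equiv.Perm ℤ where
  toFun p := p - rotationShift n u g h p
  invFun t := t + rotationUnshift n u g h t
  left_inv p := by simp only [rotationUnshift_sub_shift hg hh hn, sub_add_cancel]
  right_inv t := by simp only [rotationShift_add_unshift hg hh hn, add_sub_cancel_right]

section

variable (hg : 0 < g) (hh : 0 ≤ h) (hn : g + h < n)

theorem classRotation_apply (p : ℤ) : classRotation u hg hh hn p = p - rotationShift n u g h p :=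
  rfl

theorem classRotation_apply_of_modEq (hp : p ≡ u [ZMOD n]) :
    classRotation u hg hh hn p = p - g :=
  congrArg (p - ·) (if_pos hp)

theorem classRotation_symm_apply_of_modEq_sub (ht : t ≡ u - g [ZMOD n]) :
    (classRotation u hg hh hn).symm t = t + g :=
  congrArg (t + ·) (if_pos ht)

theorem classRotation_symm_add (hP : n ∣ P) (t : ℤ) :
    (classRotation u hg hh hn).symm (t + P) = (classRotation u hg hh hn).symm t + P := by
  have hmod (a : ℤ) : t + P ≡ a [ZMOD n] ↔ t ≡ a [ZMOD n] := by
    have : t + P ≡ t [ZMOD n] := by simpa using (Int.modEq_zero_iff_dvd.2 hP).add_left t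
    exact ⟨this.symm.trans, this.trans⟩
  change t + P + rotationUnshift n u g h (t + P) = t + rotationUnshift n u g h t + P
  simp only [rotationUnshift, hmod]
  ring

theorem rotationShift_congr (hpt : p ≡ t [ZMOD n]) :
    rotationShift n u g h p = rotationShift n u g h t := by
  have hmod (a : ℤ) : p ≡ a [ZMOD n] ↔ t ≡ a [ZMOD n] := ⟨hpt.symm.trans, hpt.trans⟩
  simp only [rotationShift, hmod]

theorem rotationShift_cases (p : ℤ) :
    p ≡ u [ZMOD n] ∧ rotationShift n u g h p = g ∨
    p ≡ u - g [ZMOD n] ∧ rotationShift n u g h p = n - g - h ∨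
    h ≠ 0 ∧ p ≡ u + h [ZMOD n] ∧ rotationShift n u g h p = h ∨
    rotationShift n u g h p = 0 := by
  unfold rotationShift
  split_ifs with hu hq hv
  · exact .inl ⟨hu, rfl⟩
  · exact .inr (.inl ⟨hq, rfl⟩)
  · exact .inr (.inr (.inl ⟨fun hh => hu (by simpa [hh] using hv), hv, rfl⟩))
  · exact .inr (.inr (.inr rfl))

theorem eq_of_le_of_classRotation_lt (hp : u ≤ p) (hlt : classRotation u hg hh hn p < u) :
    p = u := by
  rw [classRotation_apply] at hlt
  rcases rotationShift_cases (n := n) (u := u) (g := g) (h := h) p with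
    ⟨hmod, heq⟩ | ⟨hmod, heq⟩ | ⟨-, hmod, heq⟩ | heq <;> rw [heq] at hlt
  · exact eq_of_modEq_of_mem_Ico hmod ⟨hp, by linarith⟩ ⟨le_rfl, by linarith⟩
  · linarith [add_le_of_modEq_of_lt hmod.symm (by linarith)]
  · have := eq_of_modEq_of_mem_Ico hmod (c := u) ⟨hp, by linarith⟩ ⟨by linarith, by linarith⟩
    linarith
  · linarith

end

end Rotations

section RotatableClasses

variable {A : Type*} {m : A → ℕ} {s : ℤ → A} {ρ ρ' : A → ℤ} {i : ℕ} {u g h p : ℤ} {φ : A}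
  {D : Set ℤ}

/-- Every occurrence of `w` can serve as the start of its base progression. -/
def Homogeneous (m : A → ℕ) (s : ℤ → A) (w : A) : Prop :=
  ∀ t, s t = w → Sandwiched (m w) w s t

/-- The letter `w` is homogeneous and occurs only in the class of `c` modulo `2 ^ i`. -/
structure IsResident (m : A → ℕ) (s : ℤ → A) (i : ℕ) (c : ℤ) (w : A) : Prop where
  homogeneous : Homogeneous m s w
  modEq : ∀ t, s t = w → t ≡ c [ZMOD 2 ^ i]

/-- Conditions on the letters in the classes of `u`, `u - g` and `u + h` modulo `2 ^ i` under which
`classRotation` is realisable, starting at the extra position `u` with `φ` as filler. -/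
structure IsRotatable (m : A → ℕ) (s : ℤ → A) (ρ : A → ℤ) (i : ℕ) (u g h : ℤ) (φ : A) : Prop where
  isBase : IsBase m s ρ
  isExtra : IsExtra m s ρ u
  up : ∀ p, p ≡ u [ZMOD 2 ^ i] → s p ≠ s u → g ≤ 2 ^ m (s p) ∧ IsResident m s i u (s p)
  down : ∀ p, p ≡ u - g [ZMOD 2 ^ i] →
    s p ≠ s u ∧ 2 ^ i - g - h ≤ 2 ^ m (s p) ∧ IsResident m s i (u - g) (s p)
  side : h ≠ 0 → ∀ p, p ≡ u + h [ZMOD 2 ^ i] → ¬ IsExtra m s ρ p ∧ h ≤ 2 ^ m (s p) ∧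
    ∀ t, s t = s p → t ≡ u + h [ZMOD 2 ^ i] ∨ s t = s u ∧ t ≡ u [ZMOD 2 ^ i]
  filler_up : ∀ p, p ≡ u [ZMOD 2 ^ i] → s p ≠ φ
  filler_down : ∀ p, p ≡ u - g [ZMOD 2 ^ i] → s p ≠ φ ∧ p ≡ ρ φ [ZMOD 2 ^ m φ]
  filler_side : ∀ p, p ≡ u + h [ZMOD 2 ^ i] → s p ≠ φ

theorem IsBase.exists_rebase (H : IsBase m s ρ) (c : A → ℤ) (Z : Set A)
    (hZ : ∀ w ∈ Z, Homogeneous m s w) :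
    ∃ ρ', IsBase m s ρ' ∧ (∀ w ∉ Z, ρ' w = ρ w) ∧
      ∀ p, s p ∈ Z → p ∈ Set.Ico (c (s p)) (c (s p) + 2 ^ m (s p)) → ¬ IsExtra m s ρ' p := by
  have hletter (w : A) : ∃ r, Sandwiched (m w) w s r ∧ (w ∉ Z → r = ρ w) ∧
      ∀ p, w ∈ Z → s p = w → p ∈ Set.Ico (c w) (c w + 2 ^ m w) → p = r := by
    by_cases hw : w ∈ Z ∧ ∃ r ∈ Set.Ico (c w) (c w + 2 ^ m w), s r = w
    · obtain ⟨hw, r, hr, hsr⟩ := hw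
      exact ⟨r, hZ w hw r hsr, absurd hw, fun p _ hp hmem =>
        eq_of_modEq_of_mem_Ico ((hZ w hw r hsr).modEq_of_eq hp) hmem hr⟩
    · exact ⟨ρ w, H w, fun _ => rfl, fun p hwZ hp hmem => absurd ⟨hwZ, p, hmem, hp⟩ hw⟩
  choose ρ' hbase hold hnew using hletter
  exact ⟨ρ', hbase, hold, fun p hp hmem => not_not.2 (hnew _ p hp rfl hmem ▸ rfl)⟩

namespace IsRotatable

theorem isExtra_of_modEq (H : IsRotatable m s ρ i u g h φ) (hi : m (s u) < i)
    (hp : p ≡ u [ZMOD 2 ^ i]) (hs : s p = s u) : IsExtra m s ρ p :=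
  H.isExtra.of_modEq (modEq_two_pow_of_le hp hi) hs

theorem le_of_not_isExtra (H : IsRotatable m s ρ i u g h φ) (hp : ¬ IsExtra m s ρ p)
    (hpu : p ≡ u [ZMOD 2 ^ i]) (hs : s p = s u) : i ≤ m (s u) :=
  not_lt.1 fun hi => hp (H.isExtra_of_modEq hi hpu hs)

theorem modEq_base (H : IsRotatable m s ρ i u g h φ) (hi : i ≤ m (s p)) :
    p ≡ ρ (s p) [ZMOD 2 ^ i] :=
  modEq_two_pow_of_le (H.isBase.modEq p) hi

theorem modEq_base_of_shift_ne_zero (H : IsRotatable m s ρ i u g h φ)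
    (hp : m (s u) < i → p ≡ u [ZMOD 2 ^ i] → s p ≠ s u)
    (hshift : rotationShift (2 ^ i) u g h p ≠ 0) : p ≡ ρ (s p) [ZMOD 2 ^ i] := by
  have hbase := H.isBase.apply_base (s p)
  rcases rotationShift_cases p with ⟨hmod, -⟩ | ⟨hmod, -⟩ | ⟨hh, hmod, -⟩ | heq
  · by_cases hs : s p = s u
    · exact H.modEq_base (hs ▸ not_lt.1 fun hi => hp hi hmod hs)
    · exact hmod.trans ((H.up p hmod hs).2.modEq _ hbase).symm
  · exact hmod.trans ((H.down p hmod).2.2.modEq _ hbase).symm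
  · rcases (H.side hh p hmod).2.2 _ hbase with hr | ⟨hs, hr⟩
    · exact hmod.trans hr.symm
    · have hi := H.le_of_not_isExtra (H.isBase.not_isExtra_base _) hr hs
      exact H.modEq_base (by rwa [← hbase, hs])
  · exact absurd heq hshift

theorem modEq_base_of_base_shift_ne_zero (H : IsRotatable m s ρ i u g h φ)
    (hp : m (s u) < i → p ≡ u [ZMOD 2 ^ i] → s p ≠ s u)
    (hshift : rotationShift (2 ^ i) u g h (ρ (s p)) ≠ 0) : p ≡ ρ (s p) [ZMOD 2 ^ i] := by
  have hbase := H.isBase.apply_base (s p)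
  rcases rotationShift_cases (ρ (s p)) with ⟨hmod, -⟩ | ⟨hmod, -⟩ | ⟨hh, hmod, -⟩ | heq
  · by_cases hs : s p = s u
    · exact H.modEq_base (hs ▸ H.le_of_not_isExtra (H.isBase.not_isExtra_base _) hmod
        (hbase.trans hs))
    · exact ((H.up _ hmod (by rwa [hbase])).2.modEq p hbase.symm).trans hmod.symm
  · exact ((H.down _ hmod).2.2.modEq p hbase.symm).trans hmod.symm
  · rcases (H.side hh _ hmod).2.2 p hbase.symm with hr | ⟨hs, hr⟩
    · exact hr.trans hmod.symm
    · exact H.modEq_base (hs ▸ not_lt.1 fun hi => hp hi hr hs)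
  · exact absurd heq hshift

theorem shift_base (H : IsRotatable m s ρ i u g h φ)
    (hp : m (s u) < i → p ≡ u [ZMOD 2 ^ i] → s p ≠ s u) :
    rotationShift (2 ^ i) u g h p = rotationShift (2 ^ i) u g h (ρ (s p)) := by
  by_contra hne
  refine hne (rotationShift_congr ?_)
  by_cases hshift : rotationShift (2 ^ i) u g h p = 0
  · exact H.modEq_base_of_base_shift_ne_zero hp fun h0 => hne (hshift.trans h0.symm)
  · exact H.modEq_base_of_shift_ne_zero hp hshift

variable (hg : 0 < g) (hh : 0 ≤ h) (hn : g + h < 2 ^ i)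

include hg hh hn in
theorem shift_mem (H : IsRotatable m s ρ i u g h φ) (w : A) :
    rotationShift (2 ^ i) u g h (ρ w) ∈ Set.Icc (0 : ℤ) (2 ^ m w) := by
  have hbase := H.isBase.apply_base w
  rcases rotationShift_cases (ρ w) with ⟨hmod, heq⟩ | ⟨hmod, heq⟩ | ⟨hh', hmod, heq⟩ | heq <;>
    rw [heq]
  · refine ⟨hg.le, ?_⟩
    by_cases hs : s (ρ w) = s u
    · have hi := H.le_of_not_isExtra (H.isBase.not_isExtra_base w) hmod hs
      rw [← hs, hbase] at hi
      have : (2 : ℤ) ^ i ≤ 2 ^ m w := pow_le_pow_right₀ one_le_two hi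
      linarith
    · simpa only [hbase] using (H.up _ hmod hs).1
  · exact ⟨by linarith, by simpa only [hbase] using (H.down _ hmod).2.1⟩
  · exact ⟨hh, by simpa only [hbase] using (H.side hh' _ hmod).2.1⟩
  · exact ⟨le_rfl, by positivity⟩

theorem filler_shift (H : IsRotatable m s ρ i u g h φ) :
    rotationShift (2 ^ i) u g h (ρ φ) = 0 := by
  have hbase := H.isBase.apply_base φ
  rcases rotationShift_cases (ρ φ) with ⟨hmod, -⟩ | ⟨hmod, -⟩ | ⟨-, hmod, -⟩ | heq
  · exact absurd hbase (H.filler_up _ hmod)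
  · exact absurd hbase (H.filler_down _ hmod).1
  · exact absurd hbase (H.filler_side _ hmod)
  · exact heq

theorem extra_mem (H : IsRotatable m s ρ i u g h φ)
    (hup : ∀ p, p ≡ u [ZMOD 2 ^ i] → s p ≠ s u → p ∈ Set.Ico (u - 2 ^ m (s p)) u →
      ¬ IsExtra m s ρ p)
    (hdown : ∀ p, p ≡ u - g [ZMOD 2 ^ i] →
      p - (2 ^ i - g - h) ∈ Set.Ico u (u + 2 ^ m (s p)) → ¬ IsExtra m s ρ p)
    (hext : IsExtra m s ρ p) (hshift : rotationShift (2 ^ i) u g h p ≠ 0) :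
    p ≡ u [ZMOD 2 ^ i] ∧ p ∉ Set.Ico (u - 2 ^ m (s p)) u ∨
      p ≡ u - g [ZMOD 2 ^ i] ∧
        p - rotationShift (2 ^ i) u g h p ∉ Set.Ico u (u + 2 ^ m (s p)) := by
  rcases rotationShift_cases p with ⟨hmod, -⟩ | ⟨hmod, heq⟩ | ⟨hh, hmod, -⟩ | heq
  · refine .inl ⟨hmod, fun hwindow => ?_⟩
    by_cases hs : s p = s u
    · have := add_le_of_modEq_of_lt (hext.modEq_of_eq H.isExtra H.isBase hs) hwindow.2
      rw [hs] at hwindow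
      have hpos : (0 : ℤ) < 2 ^ m (s u) := by positivity
      linarith [hwindow.1, pow_succ' (2 : ℤ) (m (s u))]
    · exact hup p hmod hs hwindow hext
  · rw [heq]
    exact .inr ⟨hmod, fun hwindow => hdown p hmod hwindow hext⟩
  · exact absurd hext (H.side hh p hmod).1
  · exact absurd heq hshift

theorem isRearrangement (H : IsRotatable m s ρ i u g h φ)
    (hup : ∀ p, p ≡ u [ZMOD 2 ^ i] → s p ≠ s u → p ∈ Set.Ico (u - 2 ^ m (s p)) u →
      ¬ IsExtra m s ρ p)
    (hdown : ∀ p, p ≡ u - g [ZMOD 2 ^ i] →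
      p - (2 ^ i - g - h) ∈ Set.Ico u (u + 2 ^ m (s p)) → ¬ IsExtra m s ρ p)
    (hD : D ⊆ {t | t ≡ u - g [ZMOD 2 ^ i]})
    (hDu : m (s u) < i → ∀ p, p ≡ u [ZMOD 2 ^ i] → s p = s u → p - g ∈ D) :
    IsRearrangement m s ρ (classRotation u hg hh hn) {t | t ≡ u - g [ZMOD 2 ^ i]} D φ u where
  isBase := H.isBase
  shift_mem w := by
    rw [classRotation_apply, sub_sub_cancel]
    exact H.shift_mem hg hh hn w
  filler_fixed := by rw [classRotation_apply, H.filler_shift, sub_zero]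
  subset := hD
  modEq_filler p hp := (H.filler_down p hp).2
  apply_eq p := by
    by_cases hp : m (s u) < i ∧ p ≡ u [ZMOD 2 ^ i] ∧ s p = s u
    · rw [classRotation_apply_of_modEq hg hh hn hp.2.1]
      exact .inr ⟨H.isExtra_of_modEq hp.1 hp.2.1 hp.2.2, hDu hp.1 p hp.2.1 hp.2.2⟩
    · left
      rw [classRotation_apply, classRotation_apply, sub_sub_cancel,
        H.shift_base fun h₁ h₂ h₃ => hp ⟨h₁, h₂, h₃⟩]
  isExtra_of_cross p hp hlt := eq_of_le_of_classRotation_lt hg hh hn hp hlt ▸ H.isExtra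
  extra_mem p hext hne := by
    have hshift : rotationShift (2 ^ i) u g h p ≠ 0 := fun h0 => by
      by_cases hp : p ≡ u [ZMOD 2 ^ i]
      · exact hg.ne' (by rwa [rotationShift, if_pos hp] at h0)
      · rw [H.shift_base fun _ hp' => absurd hp' hp] at h0
        exact hne (by rw [classRotation_apply, h0, sub_zero])
    refine (H.extra_mem hup hdown hext hshift).imp_left fun ⟨hmod, hwindow⟩ => ⟨?_, hwindow⟩
    rw [classRotation_apply_of_modEq hg hh hn hmod]
    exact hmod.sub_right g

include hg hh hn in
theorem rebase (H : IsRotatable m s ρ i u g h φ) (hbase : IsBase m s ρ')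
    (hold : ∀ w, (w ≠ s u → ∀ p, p ≡ u [ZMOD 2 ^ i] ∨ p ≡ u - g [ZMOD 2 ^ i] → s p ≠ w) →
      ρ' w = ρ w) : IsRotatable m s ρ' i u g h φ where
  isBase := hbase
  isExtra := by
    rw [IsExtra, hold _ fun hne => absurd rfl hne]
    exact H.isExtra
  up := H.up
  down := H.down
  side hh' p hp := by
    refine ⟨?_, (H.side hh' p hp).2⟩
    rw [IsExtra, hold]
    · exact (H.side hh' p hp).1
    intro hpu t ht hst
    rcases (H.side hh' p hp).2.2 t hst with htv | ⟨hs, -⟩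
    · rcases ht with htu | htq
      · exact not_add_modEq_self (lt_of_le_of_ne hh hh'.symm) (by linarith) (htv.symm.trans htu)
      · exact add_not_modEq_sub hg hh hn htv htq
    · exact hpu (hst.symm.trans hs)
  filler_up := H.filler_up
  filler_down p hp := by
    rw [hold φ fun _ t ht => ht.elim (H.filler_up t) fun ht => (H.filler_down t ht).1]
    exact H.filler_down p hp
  filler_side := H.filler_side

include hg hh hn in
/-- The base progressions of the displaced homogeneous letters can be chosen to start next to `u`,
which keeps their extra occurrences away from `u`. -/
theorem exists_windowed (H : IsRotatable m s ρ i u g h φ) :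
    ∃ ρ', IsRotatable m s ρ' i u g h φ ∧
      (∀ p, p ≡ u [ZMOD 2 ^ i] → s p ≠ s u → p ∈ Set.Ico (u - 2 ^ m (s p)) u →
        ¬ IsExtra m s ρ' p) ∧
      (∀ p, p ≡ u - g [ZMOD 2 ^ i] →
        p - (2 ^ i - g - h) ∈ Set.Ico u (u + 2 ^ m (s p)) → ¬ IsExtra m s ρ' p) ∧
      ∀ w, (w ≠ s u → ∀ p, p ≡ u [ZMOD 2 ^ i] ∨ p ≡ u - g [ZMOD 2 ^ i] → s p ≠ w) →
        ρ' w = ρ w := by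
  obtain ⟨ρ', hbase, hold, hnew⟩ := H.isBase.exists_rebase
    (fun w => if ∃ p, p ≡ u - g [ZMOD 2 ^ i] ∧ s p = w then u + (2 ^ i - g - h) else u - 2 ^ m w)
    {w | w ≠ s u ∧ ∃ p, (p ≡ u [ZMOD 2 ^ i] ∨ p ≡ u - g [ZMOD 2 ^ i]) ∧ s p = w}
    (by
      rintro w ⟨hw, p, hp | hp, rfl⟩
      · exact (H.up p hp hw).2.homogeneous
      · exact (H.down p hp).2.2.homogeneous)
  have hold' (w : A)
      (hw : w ≠ s u → ∀ p, p ≡ u [ZMOD 2 ^ i] ∨ p ≡ u - g [ZMOD 2 ^ i] → s p ≠ w) :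
      ρ' w = ρ w := hold w fun ⟨hne, p, hp, hs⟩ => hw hne p hp hs
  refine ⟨ρ', H.rebase hg hh hn hbase hold', fun p hp hne hmem => ?_, fun p hp hmem => ?_, hold'⟩
  · refine hnew p ⟨hne, p, .inl hp, rfl⟩ ?_
    rw [if_neg]
    · simpa using hmem
    rintro ⟨q, hq, hs⟩
    exact not_modEq_sub hg (by linarith) ((H.up p hp hne).2.modEq q hs) hq
  · refine hnew p ⟨(H.down p hp).1, p, .inr hp, rfl⟩ ?_
    rw [if_pos ⟨p, hp, rfl⟩]
    exact ⟨by linarith [hmem.1], by linarith [hmem.2]⟩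

theorem exists_connected {P : ℤ} (H : IsRotatable m s ρ i u g h φ) (hs : Periodic s P)
    (hP₀ : 0 < P) (hP : ∀ σ, (2 : ℤ) ^ (m σ + 1) ∣ P) (hi : (2 : ℤ) ^ i ∣ P)
    (hD : D ⊆ {t | t ≡ u - g [ZMOD 2 ^ i]}) (hDP : Periodic (· ∈ D) P)
    (hDu : m (s u) < i → ∀ p, p ≡ u [ZMOD 2 ^ i] → s p = s u → p - g ∈ D) :
    ∃ ρ', (∀ w, (∀ p, p ≡ u [ZMOD 2 ^ i] ∨ p ≡ u - g [ZMOD 2 ^ i] ∨ p ≡ u + h [ZMOD 2 ^ i] →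
        s p ≠ w) → ρ' w = ρ w) ∧
      IsExtra m (s ∘ (classRotation u hg hh hn).symm) ρ' (u - g) ∧
      IsBase m (donate m (s ∘ (classRotation u hg hh hn).symm) ρ' D φ) ρ' ∧
      Connected m s (donate m (s ∘ (classRotation u hg hh hn).symm) ρ' D φ) := by
  obtain ⟨ρ', H', hup, hdown, hold⟩ := H.exists_windowed hg hh hn
  have hrot := H'.isRearrangement hg hh hn hup hdown hD hDu
  have hclass : Periodic (· ∈ {t | t ≡ u - g [ZMOD 2 ^ i]}) P := fun t => by
    have : t + P ≡ t [ZMOD 2 ^ i] := by simpa using (Int.modEq_zero_iff_dvd.2 hi).add_left t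
    exact propext ⟨this.symm.trans, this.trans⟩
  refine ⟨classRotation u hg hh hn ∘ ρ', fun w hw => ?_, ?_,
    hrot.isBase_donate subset_rfl hrot.subset,
    hrot.connected hs (classRotation_symm_add hg hh hn hi) hclass hDP hP₀ hP⟩
  · rw [comp_apply, hold w fun _ p hp => hw p (hp.imp_right .inl), classRotation_apply]
    have hbase := H.isBase.apply_base w
    rcases rotationShift_cases (ρ w) with ⟨hmod, -⟩ | ⟨hmod, -⟩ | ⟨-, hmod, -⟩ | heq
    · exact absurd hbase (hw _ (.inl hmod))
    · exact absurd hbase (hw _ (.inr (.inl hmod)))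
    · exact absurd hbase (hw _ (.inr (.inr hmod)))
    · rw [heq, sub_zero]
  · rw [← classRotation_apply_of_modEq hg hh hn rfl, hrot.isExtra_apply_iff]
    exact H'.isExtra

end IsRotatable

end RotatableClasses

section Transfers

variable {A : Type*} {m : A → ℕ} {s s' : ℤ → A} {ρ ρ' : A → ℤ} {x y w : A} {P u g h q : ℤ}
  {i j : ℕ} {D : Set ℤ}

theorem perm_symm_add {e : Equiv.Perm ℤ} (he : ∀ t, e (t + P) = e t + P) (t : ℤ) :
    e.symm (t + P) = e.symm t + P := by
  rw [e.symm_apply_eq, he, e.apply_symm_apply]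

/-- The string `s'` arises from `s` by a `P`-equivariant permutation of the positions, followed by
turning at least one, but perhaps not every, occurrence of `x` into `y`. -/
def IsTransfer (P : ℤ) (s s' : ℤ → A) (x y : A) : Prop :=
  ∃ e : Equiv.Perm ℤ, (∀ t, e (t + P) = e t + P) ∧
    (∀ t, s' (e t) = s t ∨ s t = x ∧ s' (e t) = y) ∧ ∃ t, s t = x ∧ s' (e t) = y

theorem IsTransfer.of_comp_symm {e : Equiv.Perm ℤ} (he : ∀ t, e.symm (t + P) = e.symm t + P)
    (h : IsTransfer P (s ∘ e.symm) s' x y) : IsTransfer P s s' x y := by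
  obtain ⟨f, hf, hmove, t, ht⟩ := h
  refine ⟨e.trans f, fun t => ?_, fun t => ?_, e.symm t, ?_⟩
  · have het : e (t + P) = e t + P := perm_symm_add (e := e.symm) he t
    rw [Equiv.trans_apply, het, hf, Equiv.trans_apply]
  · simpa using hmove (e t)
  · simpa using ht

theorem isTransfer_donate (e : Equiv.Perm ℤ) (he : ∀ t, e.symm (t + P) = e.symm t + P)
    (hD : ∀ t ∈ D, s (e.symm t) = x) (hq : q ∈ D) (hext : IsExtra m (s ∘ e.symm) ρ q) :
    IsTransfer P s (donate m (s ∘ e.symm) ρ D y) x y := by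
  refine .of_comp_symm he ⟨.refl ℤ, fun _ => rfl, fun t => ?_, q, hD q hq, if_pos ⟨hq, hext⟩⟩
  by_cases ht : t ∈ D ∧ IsExtra m (s ∘ e.symm) ρ t
  · exact .inr ⟨hD t ht.1, if_pos ht⟩
  · exact .inl (if_neg ht)

/-- Some uniform string reachable from `s` arises by transferring occurrences of `x` to `y`. -/
def Transferable (m : A → ℕ) (P : ℤ) (s : ℤ → A) (x y : A) : Prop :=
  ∃ s' ρ', IsBase m s' ρ' ∧ Periodic s' P ∧ Connected m s s' ∧ IsTransfer P s s' x y

/-- The occurrences of `w` form a single class modulo `2 ^ j`. -/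
def OccupiesClass (s : ℤ → A) (j : ℕ) (w : A) : Prop :=
  ∀ p, s p = w → ∀ t, s t = w ↔ t ≡ p [ZMOD 2 ^ j]

/-- The frequency of the letter `w` is one of the two extreme values admitted by `m`. -/
def IsBinary (m : A → ℕ) (s : ℤ → A) (w : A) : Prop :=
  OccupiesClass s (m w) w ∨ OccupiesClass s (m w + 1) w

theorem OccupiesClass.comp_symm (hw : OccupiesClass s j w) {e : Equiv.Perm ℤ} {d : ℤ}
    (he : ∀ p, s p = w → e p = p - d) : OccupiesClass (s ∘ e.symm) j w := fun p hp t => by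
  have hsub (t : ℤ) (ht : s (e.symm t) = w) : t + d = e.symm t := by
    have := he _ ht
    rw [e.apply_symm_apply] at this
    linarith
  refine ⟨fun ht => ?_, fun ht => ?_⟩
  · exact modEq_of_sub_eq ((hw _ hp _).1 ht) (by rw [← hsub t ht, ← hsub p hp]; ring)
  · have hsd : s (t + d) = w := (hw _ hp _).2 (by rw [← hsub p hp]; exact ht.add_right d)
    rw [comp_apply, (e.symm_apply_eq).2 (by rw [he _ hsd, add_sub_cancel_right]), hsd]

theorem OccupiesClass.lt_of_modEq (h : OccupiesClass s j (s q)) {p : ℤ} (hp : s p ≠ s q)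
    (hpq : p ≡ q [ZMOD 2 ^ i]) : i < j :=
  not_le.1 fun hji => hp ((h q rfl p).2 (modEq_two_pow_of_le hpq hji))

theorem IsBinary.exists_occupiesClass (h : IsBinary m s w) :
    ∃ j, m w ≤ j ∧ j ≤ m w + 1 ∧ OccupiesClass s j w :=
  h.elim (fun h => ⟨_, le_rfl, Nat.le_succ _, h⟩) fun h => ⟨_, Nat.le_succ _, le_rfl, h⟩

theorem IsBinary.homogeneous (h : IsBinary m s w) : Homogeneous m s w := fun t ht => by
  obtain ⟨j, hj, hj', hocc⟩ := h.exists_occupiesClass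
  exact ⟨fun p hp => (hocc t ht p).2 (modEq_two_pow_of_le hp hj'),
    fun p hp => modEq_two_pow_of_le ((hocc t ht p).1 hp) hj⟩

theorem IsBinary.isResident (h : IsBinary m s (s q)) {p : ℤ} (hp : s p ≠ s q)
    (hqp : q ≡ p [ZMOD 2 ^ i]) : i ≤ m (s q) ∧ IsResident m s i p (s q) := by
  obtain ⟨j, hj, hj', hocc⟩ := h.exists_occupiesClass
  have hij := hocc.lt_of_modEq hp hqp.symm
  exact ⟨by omega, h.homogeneous, fun t ht =>
    (modEq_two_pow_of_le ((hocc q rfl t).1 ht) hij.le).trans hqp⟩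

theorem IsBinary.occupiesClass_of_isExtra (h : IsBinary m s (s q)) (hbase : IsBase m s ρ)
    (hq : IsExtra m s ρ q) : OccupiesClass s (m (s q)) (s q) :=
  h.resolve_right fun h => hq ((h _ (hbase.apply_base _) q).1 rfl)

section

variable (hs : Periodic s P) (hP₀ : 0 < P) (hP : ∀ σ, (2 : ℤ) ^ (m σ + 1) ∣ P)

include hs in
theorem periodic_setOf_modEq {r : ℤ} {n : ℤ} (hn : n ∣ P) :
    Periodic (· ∈ {t | t ≡ r [ZMOD n] ∧ s (t + g) = x}) P := fun t => by
  simp only [Set.mem_ofPred_eq, add_right_comm t P g, hs (t + g), periodic_modEq hn t]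

include hs hP₀ hP in
theorem IsRotatable.transferable (H : IsRotatable m s ρ i u g h y) (hg : 0 < g) (hh : 0 ≤ h)
    (hn : g + h < 2 ^ i) (hi : (2 : ℤ) ^ i ∣ P) : Transferable m P s (s u) y := by
  have hDP := periodic_setOf_modEq (r := u - g) (x := s u) (g := g) hs hi
  obtain ⟨ρ', -, hext, hbase, hconn⟩ := H.exists_connected hg hh hn hs hP₀ hP hi
    (fun t ht => ht.1) hDP fun _ p hp hsp => ⟨hp.sub_right g, by rwa [sub_add_cancel]⟩
  have he := classRotation_symm_add (u := u) hg hh hn hi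
  refine ⟨_, ρ', hbase, periodic_donate (fun t => ?_) hP hDP, hconn,
    isTransfer_donate _ he (fun t ht => ?_) ⟨rfl, by rw [sub_add_cancel]⟩ hext⟩
  · rw [comp_apply, he, hs, comp_apply]
  · rw [classRotation_symm_apply_of_modEq_sub hg hh hn ht.1, ht.2]

include hs hP in
theorem IsBase.transferable (h : IsBase m s ρ) (hu : IsExtra m s ρ u)
    (huy : u ≡ ρ y [ZMOD 2 ^ m y]) : Transferable m P s (s u) y := by
  have hDP := periodic_setOf_modEq (r := ρ y) (x := s u) (g := 0) hs
    ((pow_dvd_pow 2 (m y).le_succ).trans (hP y))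
  have hbase := h.donate (D := {t | t ≡ ρ y [ZMOD 2 ^ m y] ∧ s (t + 0) = s u}) fun t ht => ht.1
  exact ⟨_, ρ, hbase, periodic_donate hs hP hDP, h.connected hbase,
    isTransfer_donate (.refl ℤ) (fun _ => rfl) (fun t ht => by simpa using ht.2)
      ⟨huy, by rw [add_zero]⟩ hu⟩

include hs hP₀ hP in
theorem IsRotatable.exists_swapped (H : IsRotatable m s ρ i u g 0 y) (hg : 0 < g)
    (hn : g < 2 ^ i) (hi : (2 : ℤ) ^ i ∣ P) (hu : i ≤ m (s u)) :
    ∃ (e : Equiv.Perm ℤ) (ρ' : A → ℤ), (∀ t, e.symm (t + P) = e.symm t + P) ∧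
      (∀ p, p ≡ u [ZMOD 2 ^ i] → e p = p - g) ∧
      (∀ p, ¬ p ≡ u [ZMOD 2 ^ i] → ¬ p ≡ u - g [ZMOD 2 ^ i] → e p = p) ∧
      (∀ w, (∀ p, p ≡ u [ZMOD 2 ^ i] ∨ p ≡ u - g [ZMOD 2 ^ i] → s p ≠ w) → ρ' w = ρ w) ∧
      (∀ j w, OccupiesClass s j w → OccupiesClass (s ∘ e.symm) j w) ∧
      IsBase m (s ∘ e.symm) ρ' ∧ Connected m s (s ∘ e.symm) := by
  have hn' : g + 0 < 2 ^ i := by rwa [add_zero]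
  obtain ⟨ρ', hold, -, hbase, hconn⟩ := H.exists_connected (D := ∅) hg le_rfl hn' hs hP₀ hP hi
    (Set.empty_subset _) (fun _ => rfl) fun hlt => absurd hu hlt.not_ge
  have hempty (e : Equiv.Perm ℤ) : donate m (s ∘ e.symm) ρ' ∅ y = s ∘ e.symm :=
    funext fun t => if_neg fun ht => ht.1
  rw [hempty] at hbase hconn
  refine ⟨_, ρ', classRotation_symm_add hg le_rfl hn' hi,
    fun p => classRotation_apply_of_modEq hg le_rfl hn', fun p hpu hpq => ?_, fun w hw => ?_,
    fun j w hocc => ?_, hbase, hconn⟩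
  · rw [classRotation_apply]
    simp only [rotationShift, add_zero, hpu, hpq, if_false, sub_zero]
  · refine hold w fun p hp => hw p ?_
    rw [add_zero] at hp
    tauto
  · refine hocc.comp_symm (d := rotationShift (2 ^ i) u g 0 (ρ w)) fun p hp => ?_
    rw [classRotation_apply, H.shift_base fun hlt => absurd hu hlt.not_ge, hp]

end

end Transfers

section SingleTransfer

variable {A : Type*} {m : A → ℕ} {s : ℤ → A} {ρ : A → ℤ} {y : A} {P u v g h p q : ℤ} {i k : ℕ}

theorem IsBase.ne_of_modEq (hρ : IsBase m s ρ) (huy : ¬ u ≡ ρ y [ZMOD 2 ^ m y])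
    (hpu : p ≡ u [ZMOD 2 ^ i]) (hi : m y ≤ i) : s p ≠ y := fun hpy =>
  huy ((modEq_two_pow_of_le hpu hi).symm.trans ((hρ y).modEq_of_eq hpy))

theorem IsBase.isRotatable (hρ : IsBase m s ρ) (hu : IsExtra m s ρ u)
    (hbin : ∀ p, p ≡ u [ZMOD 2 ^ i] ∨ p = u - g → s p ≠ s u → IsBinary m s (s p))
    (hgi : g < 2 ^ i) (huy : ¬ u ≡ ρ y [ZMOD 2 ^ m y]) (hvy : ¬ u + h ≡ ρ y [ZMOD 2 ^ m y])
    (hq : u - g ≡ ρ y [ZMOD 2 ^ m y]) (hqy : s (u - g) ≠ y) (hqu : s (u - g) ≠ s u)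
    (hocc : OccupiesClass s i (s (u - g))) (hgap : 2 ^ i - g - h ≤ 2 ^ m (s (u - g)))
    (hside : h ≠ 0 → ∀ p, p ≡ u + h [ZMOD 2 ^ i] → ¬ IsExtra m s ρ p ∧ h ≤ 2 ^ m (s p) ∧
      ∀ t, s t = s p → t ≡ u + h [ZMOD 2 ^ i] ∨ s t = s u ∧ t ≡ u [ZMOD 2 ^ i]) :
    IsRotatable m s ρ i u g h y := by
  have hi : m y < i := hocc.lt_of_modEq (by rwa [hρ.apply_base, ne_comm]) hq.symm
  have hdown (p : ℤ) (hp : p ≡ u - g [ZMOD 2 ^ i]) : s p = s (u - g) := (hocc _ rfl p).2 hp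
  refine ⟨hρ, hu, fun p hp hpu => ?_, fun p hp => ?_, hside, fun p hp => ?_, fun p hp => ?_,
    fun p hp => ?_⟩
  · obtain ⟨hle, hres⟩ := (hbin p (.inl hp) hpu).isResident hpu.symm hp
    exact ⟨hgi.le.trans (pow_le_pow_right₀ one_le_two hle), hres⟩
  · rw [hdown p hp]
    exact ⟨hqu, hgap, (hbin _ (.inr rfl) hqu).homogeneous, fun t ht => (hocc _ rfl t).1 ht⟩
  · exact hρ.ne_of_modEq huy hp hi.le
  · exact ⟨hdown p hp ▸ hqy, (modEq_two_pow_of_le hp hi.le).trans hq⟩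
  · exact hρ.ne_of_modEq hvy hp hi.le

theorem IsBase.ne_of_forall_isExtra (hρ : IsBase m s ρ) (hu : IsExtra m s ρ u) (huy : s u ≠ y)
    (hno : ∀ t, IsExtra m s ρ t → s t = s u → ¬ t ≡ ρ y [ZMOD 2 ^ m y])
    (hq : q ≡ ρ y [ZMOD 2 ^ m y]) : s q ≠ s u := fun hqu => by
  have hqbase : q ≡ ρ (s u) [ZMOD 2 ^ (m (s u) + 1)] := by
    rw [← hqu]
    exact not_not.1 fun hext => hno q hext hqu hq
  rcases le_or_gt (m y) (m (s u)) with hle | hlt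
  · refine hno u hu rfl (.trans ?_ hq)
    exact modEq_two_pow_of_le ((hρ.modEq u).trans (modEq_two_pow_of_le hqbase.symm
      (Nat.le_succ _))) hle
  · refine huy (((hρ (s u)).eq_of_modEq (t := ρ y) ?_).symm.trans (hρ.apply_base y))
    exact (modEq_two_pow_of_le hq.symm hlt).trans hqbase

theorem IsBase.eq_of_base_modEq (hρ : IsBase m s ρ) (hu : IsExtra m s ρ u) (hs : s p = s u)
    (hp : ¬ IsExtra m s ρ p) (hpu : p ≡ u + 2 ^ k [ZMOD 2 ^ (k + 1)]) : k = m (s u) := by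
  have hup : u ≡ p + 2 ^ m (s u) [ZMOD 2 ^ (m (s u) + 1)] :=
    (hu.modEq_add hρ).trans ((hs ▸ not_not.1 hp).symm.add_right _)
  rcases lt_trichotomy k (m (s u)) with hlt | heq | hlt
  · refine absurd (hpu.symm.trans ?_) not_add_two_pow_modEq_self
    exact ((modEq_two_pow_of_le hup (by omega)).trans (add_two_pow_modEq p hlt)).symm
  · exact heq
  · refine absurd (hup.symm.trans ?_) not_add_two_pow_modEq_self
    exact ((modEq_two_pow_of_le hpu (by omega)).trans (add_two_pow_modEq u hlt)).symm

section

variable (hs : Periodic s P) (hP₀ : 0 < P) (hP : ∀ σ, (2 : ℤ) ^ (m σ + 1) ∣ P)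
  (hρ : IsBase m s ρ) (hbin : ∀ w, w ≠ s u → w ≠ y → IsBinary m s w) (hu : IsExtra m s ρ u)
  (huy : ¬ u ≡ ρ y [ZMOD 2 ^ m y]) (hqy : s q ≠ y) (hqu : s q ≠ s u)
  (hq : q ≡ ρ y [ZMOD 2 ^ m y])

include hs hP₀ hP hρ hbin hu huy hqy hqu hq in
theorem IsBase.transferable_of_mem_Ioo (hi : i ≤ m (s q) + 1) (hocc : OccupiesClass s i (s q))
    (hmem : q ∈ Set.Ioo (u - 2 ^ i) u) (hfar : q - (u - 2 ^ i) ≤ 2 ^ m (s q)) :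
    Transferable m P s (s u) y := by
  obtain ⟨g, rfl⟩ : ∃ g, q = u - g := ⟨u - q, by ring⟩
  have hgi : g < 2 ^ i := by linarith [hmem.1]
  have hiy : m y < i := hocc.lt_of_modEq (by rwa [hρ.apply_base, ne_comm]) hq.symm
  refine IsRotatable.transferable (i := i) (g := g) (h := 0) hs hP₀ hP
    (hρ.isRotatable hu ?_ hgi huy (by rwa [add_zero]) hq hqy hqu hocc (by linarith)
      fun h => absurd rfl h)
    (by linarith [hmem.2]) le_rfl (by rwa [add_zero])
    ((pow_dvd_pow 2 hi).trans (hP _))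
  rintro p (hp | rfl) hpu
  · exact hbin _ hpu (hρ.ne_of_modEq huy hp hiy.le)
  · exact hbin _ hqu hqy

include hs hP₀ hP hρ hbin hu huy hqy hqu hq in
theorem IsBase.transferable_of_occupiesClass (hocc : OccupiesClass s (m (s q)) (s q)) :
    Transferable m P s (s u) y := by
  obtain ⟨r, hr, hrq⟩ := exists_modEq_mem_Ico (n := 2 ^ m (s q)) (by positivity) q
    (u - 2 ^ m (s q))
  have hsr : s r = s q := (hocc q rfl r).2 hrq
  have hiy := hocc.lt_of_modEq (i := m y) (by rwa [hρ.apply_base, ne_comm]) hq.symm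
  have hne : r ≠ u - 2 ^ m (s q) := by
    rintro rfl
    exact hqu ((hocc q rfl u).2 (Int.sub_modulus_modEq_iff.1 hrq)).symm
  rw [← hsr] at hocc hqy hqu hr hne
  exact IsBase.transferable_of_mem_Ioo hs hP₀ hP hρ hbin hu huy hqy hqu
    ((modEq_two_pow_of_le hrq hiy.le).trans hq) (Nat.le_succ _) hocc
    ⟨lt_of_le_of_ne hr.1 hne.symm, by linarith [hr.2]⟩ (by linarith [hr.2])

include hs hP₀ hP hbin hu huy in
/-- After interchanging the classes of `v` and `v - g`, the letter of `v`, which occupies a whole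
class modulo `2 ^ m (s v)`, stands near the base progression of `y`. -/
theorem IsRotatable.transferable_of_swap (H : IsRotatable m s ρ i v g 0 y) (hg : 0 < g)
    (hgi : g < 2 ^ i) (hi : i ≤ m (s v)) (hocc : OccupiesClass s (m (s v)) (s v))
    (hx : ∀ t, t ≡ v [ZMOD 2 ^ i] ∨ t ≡ v - g [ZMOD 2 ^ i] → s t ≠ s u) :
    Transferable m P s (s u) y := by
  obtain ⟨e, ρ', he, hev, hefix, hold, hocc', hρ', hconn⟩ :=
    H.exists_swapped hs hP₀ hP hg hgi ((pow_dvd_pow 2 (by omega)).trans (hP (s v))) hi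
  have hs' : Periodic (s ∘ e.symm) P := fun t => by rw [comp_apply, he, hs, comp_apply]
  have hsu : (s ∘ e.symm) u = s u := by
    rw [comp_apply, (e.symm_apply_eq).2 (hefix u (fun h => hx u (.inl h) rfl)
      fun h => hx u (.inr h) rfl).symm]
  have hsv : (s ∘ e.symm) (v - g) = s v := by
    rw [comp_apply, (e.symm_apply_eq).2 (hev v rfl).symm]
  have hρu : ρ' (s u) = ρ (s u) := hold _ hx
  have hρy : ρ' y = ρ y :=
    hold _ fun p hp => hp.elim (H.filler_up p) fun hp => (H.filler_down p hp).1
  obtain ⟨s', ρ'', hρ'', hs'', hconn', htrans⟩ := IsBase.transferable_of_occupiesClass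
    (u := u) (y := y) (q := v - g) hs' hP₀ hP hρ'
    (hsu.symm ▸ fun w hwu hwy => (hbin w hwu hwy).imp (hocc' _ _) (hocc' _ _))
    (by rwa [IsExtra, hsu, hρu]) (by rwa [hρy]) (by rw [hsv]; exact H.filler_up v rfl)
    (by rw [hsv, hsu]; exact hx v (.inl rfl)) (by rw [hρy]; exact (H.filler_down _ rfl).2)
    (by rw [hsv]; exact hocc' _ _ hocc)
  rw [hsu] at htrans
  exact ⟨s', ρ'', hρ'', hs'', hconn.trans (fun σ => Int.le_of_dvd hP₀ (hP σ)) hs' hs'' hconn',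
    htrans.of_comp_symm he⟩

include hs hP₀ hP hρ hbin hu huy hqy hqu hq in
theorem IsBase.transferable_of_isExtra (hk : m (s q) = k) (hocc : OccupiesClass s (k + 1) (s q))
    (hv : IsExtra m s ρ v) (hvu : v ≡ u + 2 ^ k [ZMOD 2 ^ (k + 1)])
    (hx : ∀ t, t ≡ v [ZMOD 2 ^ (k + 1)] → s t ≠ s u)
    (hmem : q ∈ Set.Ioo (v - 2 ^ (k + 1)) (v - 2 ^ k)) : Transferable m P s (s u) y := by
  obtain ⟨g, rfl⟩ : ∃ g, q = v - g := ⟨v - q, by ring⟩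
  obtain ⟨hgi, hgk⟩ : g < 2 ^ (k + 1) ∧ 2 ^ k < g :=
    ⟨by linarith [hmem.1], by linarith [hmem.2]⟩
  have hyk : m y < k + 1 := hocc.lt_of_modEq (by rwa [hρ.apply_base, ne_comm]) hq.symm
  have huv : u ≡ v [ZMOD 2 ^ k] :=
    ((modEq_two_pow_of_le hvu k.le_succ).trans (add_two_pow_modEq u le_rfl)).symm
  have hvy : ¬ v ≡ ρ y [ZMOD 2 ^ m y] := fun h =>
    huy ((modEq_two_pow_of_le huv (Nat.lt_succ_iff.1 hyk)).trans h)
  have hbinv {p : ℤ} (hp : p ≡ v [ZMOD 2 ^ (k + 1)]) : IsBinary m s (s p) :=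
    hbin _ (hx p hp) (hρ.ne_of_modEq hvy hp hyk.le)
  have hvocc := (hbinv rfl).occupiesClass_of_isExtra hρ hv
  have hkv : k < m (s v) := hvocc.lt_of_modEq (hx v rfl).symm huv
  refine IsRotatable.transferable_of_swap (i := k + 1) (g := g) hs hP₀ hP hbin hu huy
    (hρ.isRotatable hv ?_ hgi hvy (by rwa [add_zero]) hq hqy (fun h => ?_) hocc ?_
      fun h => absurd rfl h)
    (lt_trans (by positivity) hgk) hgi hkv hvocc fun t ht => ?_
  · rintro p (hp | rfl) -
    exacts [hbinv hp, hbin _ hqu hqy]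
  · exact hkv.ne (hk.symm.trans (congrArg m h))
  · rw [hk]
    linarith [pow_succ' (2 : ℤ) k]
  · exact ht.elim (hx t) fun ht => (hocc _ rfl t).2 ht ▸ hqu

include hs hP₀ hP hρ hbin hu huy hqy hqu hq in
theorem IsBase.transferable_of_forall_not_isExtra (hk : m (s q) = k)
    (hocc : OccupiesClass s (k + 1) (s q))
    (hno : ∀ p, p ≡ u + 2 ^ k [ZMOD 2 ^ (k + 1)] → ¬ IsExtra m s ρ p)
    (hmem : q ∈ Set.Ioo (u - 2 ^ k) u) : Transferable m P s (s u) y := by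
  obtain ⟨g, rfl⟩ : ∃ g, q = u - g := ⟨u - q, by ring⟩
  obtain ⟨hgk, hg⟩ : g < 2 ^ k ∧ 0 < g := ⟨by linarith [hmem.1], by linarith [hmem.2]⟩
  have hpow := pow_succ' (2 : ℤ) k
  have hyk : m y < k + 1 := hocc.lt_of_modEq (by rwa [hρ.apply_base, ne_comm]) hq.symm
  have hclass {p : ℤ} (hp : p ≡ u + 2 ^ k [ZMOD 2 ^ (k + 1)]) : p ≡ u [ZMOD 2 ^ k] :=
    (modEq_two_pow_of_le hp k.le_succ).trans (add_two_pow_modEq u le_rfl)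
  have hvy : ¬ u + 2 ^ k ≡ ρ y [ZMOD 2 ^ m y] := fun h =>
    huy ((modEq_two_pow_of_le (hclass rfl) (Nat.lt_succ_iff.1 hyk)).symm.trans h)
  refine IsRotatable.transferable (i := k + 1) (g := g) (h := 2 ^ k) hs hP₀ hP
    (hρ.isRotatable hu ?_ (by linarith) huy hvy hq hqy hqu hocc (by rw [hk]; linarith)
      fun _ p hp => ⟨hno p hp, ?_⟩)
    hg (by positivity) (by linarith) (hk ▸ hP _)
  · rintro p (hp | rfl) hpu
    · exact hbin _ hpu (hρ.ne_of_modEq huy hp hyk.le)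
    · exact hbin _ hqu hqy
  by_cases hpu : s p = s u
  · obtain rfl := hρ.eq_of_base_modEq hu hpu (hno p hp) hp
    refine ⟨by rw [hpu], fun t ht => ?_⟩
    have htu : t ≡ u [ZMOD 2 ^ m (s u)] :=
      ((hρ (s u)).modEq_of_eq (ht.trans hpu)).trans (hρ.modEq u).symm
    exact (modEq_two_pow_succ_or htu).symm.imp_right fun h => ⟨ht.trans hpu, h⟩
  · obtain ⟨j, -, hj, hpocc⟩ := (hbin _ hpu (hρ.ne_of_modEq hvy hp hyk.le)).exists_occupiesClass
    have hkj := hpocc.lt_of_modEq (ne_comm.1 hpu) (hclass hp).symm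
    exact ⟨pow_le_pow_right₀ one_le_two (by omega), fun t ht =>
      .inl ((modEq_two_pow_of_le ((hpocc p rfl t).1 ht) hkj).trans hp)⟩

end

theorem IsBase.exists_isExtra_or_forall_ne (hρ : IsBase m s ρ) (hu : IsExtra m s ρ u)
    (hv : IsExtra m s ρ v) (hvu : v ≡ u + 2 ^ k [ZMOD 2 ^ (k + 1)]) :
    (∃ t, IsExtra m s ρ t ∧ t ≡ v [ZMOD 2 ^ (k + 1)] ∧ s t = s u) ∨
      ∀ t, t ≡ v [ZMOD 2 ^ (k + 1)] → s t ≠ s u := by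
  by_contra! hx
  obtain ⟨hno, t, htv, htu⟩ := hx
  have ht : ¬ IsExtra m s ρ t := fun ht => hno t ht htv htu
  have hk := hρ.eq_of_base_modEq hu htu ht (htv.trans hvu)
  rw [IsExtra, not_not, htu, ← hk] at ht
  exact hno v hv rfl ((hρ (s u)).eq_of_modEq (hk ▸ htv.symm.trans ht))

theorem IsBase.transferable_of_occupiesClass_succ (hs : Periodic s P) (hP₀ : 0 < P)
    (hP : ∀ σ, (2 : ℤ) ^ (m σ + 1) ∣ P) (hρ : IsBase m s ρ)
    (hbin : ∀ w, w ≠ s u → w ≠ y → IsBinary m s w) (hu : IsExtra m s ρ u)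
    (hno : ∀ t, IsExtra m s ρ t → s t = s u → ¬ t ≡ ρ y [ZMOD 2 ^ m y]) (hqy : s q ≠ y)
    (hqu : s q ≠ s u) (hq : q ≡ ρ y [ZMOD 2 ^ m y]) (hk : m (s q) = k)
    (hocc : OccupiesClass s (k + 1) (s q)) : Transferable m P s (s u) y := by
  have hpow := pow_succ' (2 : ℤ) k
  have hyk : m y < k + 1 := hocc.lt_of_modEq (by rwa [hρ.apply_base, ne_comm]) hq.symm
  have hclass {r : ℤ} (hr : r ≡ q [ZMOD 2 ^ (k + 1)]) :
      s r ≠ y ∧ s r ≠ s u ∧ r ≡ ρ y [ZMOD 2 ^ m y] ∧ m (s r) = k ∧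
      OccupiesClass s (k + 1) (s r) := by
    rw [(hocc q rfl r).2 hr]
    exact ⟨hqy, hqu, (modEq_two_pow_of_le hr hyk.le).trans hq, hk, hocc⟩
  obtain ⟨r, ⟨hr₀, hr₁⟩, hrq⟩ :=
    exists_modEq_mem_Ico (n := 2 ^ (k + 1)) (by positivity) q (u - 2 ^ (k + 1))
  obtain ⟨hry, hru, hr, hrk, hrocc⟩ := hclass hrq
  by_cases hfar : r - (u - 2 ^ (k + 1)) ≤ 2 ^ k
  · refine IsBase.transferable_of_mem_Ioo hs hP₀ hP hρ hbin hu (hno u hu rfl) hry hru hr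
      (by rw [hrk]) hrocc ⟨lt_of_le_of_ne hr₀ ?_, by linarith⟩ (by rwa [hrk])
    rintro rfl
    exact hru ((hrocc _ rfl u).2 (Int.sub_modulus_modEq_iff.2 rfl).symm).symm
  by_cases hv : ∃ v, v ≡ u + 2 ^ k [ZMOD 2 ^ (k + 1)] ∧ IsExtra m s ρ v
  swap
  · push Not at hv
    exact IsBase.transferable_of_forall_not_isExtra hs hP₀ hP hρ hbin hu (hno u hu rfl) hry hru hr
      hrk hrocc hv ⟨by linarith, by linarith⟩
  obtain ⟨v, hvu, hv⟩ := hv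
  have hshift {t : ℤ} (ht : t ≡ u + 2 ^ k [ZMOD 2 ^ (k + 1)]) :=
    hclass ((modEq_of_sub_eq (c := r + (t - (u + 2 ^ k))) (d := r) ht (by ring)).trans hrq)
  rcases hρ.exists_isExtra_or_forall_ne hu hv hvu with ⟨t, ht, htv, htu⟩ | hx
  · obtain ⟨hry, hru, hr, hrk, hrocc⟩ := hshift (htv.trans hvu)
    rw [← htu] at hbin hru ⊢
    exact IsBase.transferable_of_mem_Ioo hs hP₀ hP hρ hbin ht (hno t ht htu) hry hru hr
      (by rw [hrk]) hrocc ⟨by linarith, by linarith⟩ (by rw [hrk]; linarith)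
  · obtain ⟨hry, hru, hr, hrk, hrocc⟩ := hshift hvu
    exact IsBase.transferable_of_isExtra hs hP₀ hP hρ hbin hu (hno u hu rfl) hry hru hr hrk hrocc
      hv hvu hx ⟨by linarith, by linarith⟩

theorem IsBase.transferable_of_isBinary (hs : Periodic s P) (hP₀ : 0 < P)
    (hP : ∀ σ, (2 : ℤ) ^ (m σ + 1) ∣ P) (hρ : IsBase m s ρ)
    (hbin : ∀ w, w ≠ s u → w ≠ y → IsBinary m s w) (hu : IsExtra m s ρ u) (huy : s u ≠ y)
    (hq : q ≡ ρ y [ZMOD 2 ^ m y]) (hqy : s q ≠ y) : Transferable m P s (s u) y := by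
  by_cases hno : ∀ t, IsExtra m s ρ t → s t = s u → ¬ t ≡ ρ y [ZMOD 2 ^ m y]
  swap
  · push Not at hno
    obtain ⟨t, ht, hsu, hty⟩ := hno
    exact hsu ▸ hρ.transferable hs hP ht hty
  have hqu := hρ.ne_of_forall_isExtra hu huy hno hq
  rcases hbin _ hqu hqy with hocc | hocc
  · exact hρ.transferable_of_occupiesClass hs hP₀ hP hbin hu (hno u hu rfl) hqy hqu hq hocc
  · exact hρ.transferable_of_occupiesClass_succ hs hP₀ hP hbin hu hno hqy hqu hq rfl hocc

end SingleTransfer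

section Counting

variable {A : Type*} {m : A → ℕ} {s s' : ℤ → A} {ρ : A → ℤ} {x y σ w : A} {P u : ℤ} {M k : ℕ}
  {p q : ℤ → Prop}

/-- The number of positions in one period satisfying `p`. The period is `{1, …, P}`, as for finite
strings. -/
noncomputable def periodCount (P : ℤ) (p : ℤ → Prop) : ℕ :=
  ((Finset.Ioc 0 P).filter p).card

/-- The number of occurrences of `σ` in one period of `s`. -/
noncomputable def letterCount (P : ℤ) (s : ℤ → A) (σ : A) : ℕ :=
  periodCount P (s · = σ)

theorem periodCount_mono (h : ∀ t, p t → q t) : periodCount P p ≤ periodCount P q :=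
  Finset.card_le_card (Finset.monotone_filter_right _ fun t _ => h t)

theorem map_toIocMod {α : Type*} {f : ℤ → α} (hf : Periodic f P) (hP : 0 < P) (t : ℤ) :
    f (toIocMod hP 0 t) = f t :=
  hf.sub_zsmul_eq _

theorem toIocMod_mem_Ioc_zero (hP : 0 < P) (t : ℤ) : toIocMod hP 0 t ∈ Finset.Ioc 0 P := by
  simpa using toIocMod_mem_Ioc hP 0 t

theorem periodCount_lt (hP : 0 < P) (hp : Periodic p P) (hq : Periodic q P)
    (h : ∀ t, p t → q t) {t : ℤ} (ht : q t) (ht' : ¬ p t) : periodCount P p < periodCount P q := by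
  refine Finset.card_lt_card <| (Finset.ssubset_iff_of_subset
    (Finset.monotone_filter_right _ fun t _ => h t)).2 ⟨toIocMod hP 0 t, ?_, ?_⟩
  · exact Finset.mem_filter.2 ⟨toIocMod_mem_Ioc_zero hP t, (map_toIocMod hq hP t).symm ▸ ht⟩
  · exact fun hmem => ht' (map_toIocMod hp hP t ▸ (Finset.mem_filter.1 hmem).2)

theorem toIocMod_comp_symm_comp (hP : 0 < P) {e : Equiv.Perm ℤ} (he : ∀ t, e (t + P) = e t + P)
    {t : ℤ} (ht : t ∈ Finset.Ioc 0 P) :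
    toIocMod hP 0 (e.symm (toIocMod hP 0 (e t))) = t := by
  have he' : Periodic (fun t => toIocMod hP 0 (e.symm t)) P := fun t => by
    dsimp only
    rw [perm_symm_add he, toIocMod_add_right]
  rw [map_toIocMod he' hP, e.symm_apply_apply, toIocMod_eq_self]
  simpa using ht

theorem periodCount_comp (hP : 0 < P) (hp : Periodic p P) {e : Equiv.Perm ℤ}
    (he : ∀ t, e (t + P) = e t + P) : periodCount P (fun t => p (e t)) = periodCount P p := by
  have hpe : Periodic (fun t => p (e t)) P := fun t => by dsimp only; rw [he, hp]
  refine Finset.card_nbij' (fun t => toIocMod hP 0 (e t)) (fun t => toIocMod hP 0 (e.symm t))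
    (fun t ht => ?_) (fun t ht => ?_)
    (fun t ht => toIocMod_comp_symm_comp hP he (Finset.mem_of_mem_filter t ht))
    (fun t ht => toIocMod_comp_symm_comp hP (perm_symm_add he) (Finset.mem_of_mem_filter t ht))
  · exact Finset.mem_filter.2 ⟨toIocMod_mem_Ioc_zero hP _,
      (map_toIocMod hp hP _).symm ▸ (Finset.mem_filter.1 ht).2⟩
  · refine Finset.mem_filter.2 ⟨toIocMod_mem_Ioc_zero hP _, (map_toIocMod hpe hP _).symm ▸ ?_⟩
    simpa using (Finset.mem_filter.1 ht).2

theorem periodCount_modEq (hk : k ≤ M) (r : ℤ) :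
    periodCount (2 ^ M) (· ≡ r [ZMOD 2 ^ k]) = 2 ^ (M - k) := by
  have hdiv : (((2 ^ M : ℤ) : ℚ) - r) / ((2 ^ k : ℤ) : ℚ)
      = (((0 : ℤ) : ℚ) - r) / ((2 ^ k : ℤ) : ℚ) + ((2 ^ (M - k) : ℤ) : ℚ) := by
    push_cast
    rw [pow_sub₀ _ two_ne_zero hk]
    field_simp
    ring
  have hcard := Int.Ioc_filter_modEq_card 0 (2 ^ M) (r := 2 ^ k) (by positivity) r
  rw [hdiv, Int.floor_add_intCast, add_sub_cancel_left, max_eq_left (by positivity)] at hcard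
  rw [periodCount]
  exact_mod_cast hcard

theorem sum_letterCount [Fintype A] (s : ℤ → A) : ∑ σ, letterCount P s σ = P.toNat := by
  have h := Finset.card_eq_sum_card_fiberwise (s := Finset.Ioc 0 P) (t := Finset.univ) (f := s)
    fun _ _ => Finset.mem_coe.2 (Finset.mem_univ _)
  rw [Int.card_Ioc, sub_zero] at h
  exact h.symm

theorem Sandwiched.le_letterCount (h : Sandwiched k σ s u) (hk : k + 1 ≤ M) :
    2 ^ (M - (k + 1)) ≤ letterCount (2 ^ M) s σ :=
  periodCount_modEq hk u ▸ periodCount_mono h.eq_of_modEq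

theorem Sandwiched.letterCount_le (h : Sandwiched k σ s u) (hk : k ≤ M) :
    letterCount (2 ^ M) s σ ≤ 2 ^ (M - k) :=
  periodCount_modEq hk u ▸ periodCount_mono h.modEq_of_eq

theorem periodic_eq (hs : Periodic s P) (σ : A) : Periodic (s · = σ) P := fun t => by
  dsimp only; rw [hs]

theorem Sandwiched.eq_iff_of_letterCount_eq_min (h : Sandwiched k σ s u)
    (hs : Periodic s (2 ^ M)) (hk : k + 1 ≤ M) (hc : letterCount (2 ^ M) s σ = 2 ^ (M - (k + 1)))
    (t : ℤ) : s t = σ ↔ t ≡ u [ZMOD 2 ^ (k + 1)] := by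
  refine ⟨fun ht => by_contra fun hne => hc.not_gt ?_, fun ht => h.eq_of_modEq ht⟩
  exact periodCount_modEq hk u ▸ periodCount_lt (by positivity) (periodic_modEq (pow_dvd_pow 2 hk))
    (periodic_eq hs σ) h.eq_of_modEq ht hne

theorem Sandwiched.eq_iff_of_letterCount_eq_max (h : Sandwiched k σ s u)
    (hs : Periodic s (2 ^ M)) (hk : k ≤ M) (hc : letterCount (2 ^ M) s σ = 2 ^ (M - k))
    (t : ℤ) : s t = σ ↔ t ≡ u [ZMOD 2 ^ k] := by
  refine ⟨fun ht => h.modEq_of_eq ht, fun ht => by_contra fun hne => hc.not_lt ?_⟩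
  exact periodCount_modEq hk u ▸ periodCount_lt (by positivity) (periodic_eq hs σ)
    (periodic_modEq (pow_dvd_pow 2 hk)) h.modEq_of_eq ht hne

theorem occupiesClass_of_eq_iff (h : ∀ t, s t = σ ↔ t ≡ u [ZMOD 2 ^ k]) : OccupiesClass s k σ :=
  fun p hp t => (h t).trans ⟨fun ht => ht.trans ((h p).1 hp).symm, fun ht => ht.trans ((h p).1 hp)⟩

theorem exists_isExtra_of_lt_letterCount (hM : m σ + 1 ≤ M)
    (hc : 2 ^ (M - (m σ + 1)) < letterCount (2 ^ M) s σ) : ∃ t, s t = σ ∧ IsExtra m s ρ t := by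
  by_contra! hall
  refine hc.not_ge (periodCount_modEq hM (ρ σ) ▸ periodCount_mono fun t ht => ?_)
  simpa only [IsExtra, not_not, ht] using hall t ht

theorem exists_modEq_of_letterCount_lt (hk : k ≤ M)
    (hc : letterCount (2 ^ M) s σ < 2 ^ (M - k)) : ∃ t, t ≡ u [ZMOD 2 ^ k] ∧ s t ≠ σ := by
  by_contra! hall
  exact hc.not_ge (periodCount_modEq hk u ▸ periodCount_mono hall)

namespace IsTransfer

theorem letterCount_eq (h : IsTransfer P s s' x y) (hP : 0 < P) (hs' : Periodic s' P) (hx : w ≠ x)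
    (hy : w ≠ y) : letterCount P s' w = letterCount P s w := by
  obtain ⟨e, he, hmove, -⟩ := h
  rw [letterCount, ← periodCount_comp hP (periodic_eq hs' w) he, letterCount]
  congr! 2 with t
  rcases hmove t with ht | ⟨ht, ht'⟩
  · rw [ht]
  · simp only [ht, ht', hx.symm, hy.symm]

theorem letterCount_lt (h : IsTransfer P s s' x y) (hP : 0 < P) (hs : Periodic s P)
    (hs' : Periodic s' P) (hxy : x ≠ y) : letterCount P s' x < letterCount P s x := by
  obtain ⟨e, he, hmove, t, ht, ht'⟩ := h
  rw [letterCount, ← periodCount_comp hP (periodic_eq hs' x) he]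
  refine periodCount_lt hP (fun t => ?_) (periodic_eq hs x) (fun t ht => ?_) ht
    (ht'.trans_ne hxy.symm)
  · rw [he, hs']
  · rcases hmove t with h | h
    exacts [h.symm.trans ht, h.1]

end IsTransfer

end Counting

section Redistribution

variable {A : Type*} {lo hi c c' tgt : A → ℕ} {R : (A → ℕ) → Prop} {x y z : A}

/-- The quantity `c σ` equals one of its two bounds. -/
def IsAtBound (lo hi c : A → ℕ) (σ : A) : Prop :=
  c σ = lo σ ∨ c σ = hi σ

/-- The distribution `c'` arises from `c` by moving mass from `x` to `y`. -/
def MovesMass (c c' : A → ℕ) (x y : A) : Prop :=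
  (∀ w, w ≠ x → w ≠ y → c' w = c w) ∧ c' x < c x

theorem MovesMass.trans {c'' : A → ℕ} (h : MovesMass c c' x y) (h' : MovesMass c' c'' x y) :
    MovesMass c c'' x y :=
  ⟨fun w hx hy => (h'.1 w hx hy).trans (h.1 w hx hy), h'.2.trans h.2⟩

theorem MovesMass.isAtBound (h : MovesMass c c' x y) {w : A} (hx : w ≠ x) (hy : w ≠ y)
    (hw : IsAtBound lo hi c w) : IsAtBound lo hi c' w := by
  rwa [IsAtBound, h.1 w hx hy]

theorem MovesMass.exists_forall_ne_isAtBound (hmove : MovesMass c c' x y)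
    (hsat : c' x = lo x ∨ c' y = hi y) (hext : ∀ w, w ≠ x → w ≠ y → IsAtBound lo hi c w) :
    ∃ v, ∀ σ, σ ≠ v → IsAtBound lo hi c' σ := by
  rcases hsat with hx | hy
  · refine ⟨y, fun σ hσ => ?_⟩
    by_cases hσx : σ = x
    exacts [hσx ▸ .inl hx, hmove.isAtBound hσx hσ (hext σ hσx hσ)]
  · refine ⟨x, fun σ hσ => ?_⟩
    by_cases hσy : σ = y
    exacts [hσy ▸ .inr hy, hmove.isAtBound hσ hσy (hext σ hσ hσy)]

theorem MovesMass.add_eq_add [Fintype A] (h : MovesMass c c' x y) (hxy : x ≠ y)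
    (hsum : ∑ σ, c' σ = ∑ σ, c σ) : c' x + c' y = c x + c y := by
  have hdiff : ∑ σ, ((c' σ : ℤ) - c σ) = (c' x - c x) + (c' y - c y) :=
    Fintype.sum_eq_add x y hxy fun w hw => by rw [h.1 w hw.1 hw.2, sub_self]
  rw [Finset.sum_sub_distrib, sub_eq_zero.2 (by exact_mod_cast hsum)] at hdiff
  omega

/-- A family `R` of distributions of a fixed mass between the bounds `lo` and `hi` in which, as long
as all other letters are at a bound, mass can be moved from any `x` not at its lower bound
to any `y` not at its upper bound. How much is moved is not under control. -/
structure MassTransferable [Fintype A] (lo hi : A → ℕ) (N : ℕ) (R : (A → ℕ) → Prop) : Prop where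
  lo_le : ∀ ⦃c⦄, R c → ∀ σ, lo σ ≤ c σ
  le_hi : ∀ ⦃c⦄, R c → ∀ σ, c σ ≤ hi σ
  sum_eq : ∀ ⦃c⦄, R c → ∑ σ, c σ = N
  exists_move : ∀ ⦃c⦄, R c → ∀ ⦃x y⦄, x ≠ y → lo x < c x → c y < hi y →
    (∀ w, w ≠ x → w ≠ y → IsAtBound lo hi c w) → ∃ c', R c' ∧ MovesMass c c' x y

variable [Fintype A] {N : ℕ}

theorem MassTransferable.exists_saturating_move (h : MassTransferable lo hi N R) (hc : R c)
    (hxy : x ≠ y) (hx : lo x < c x) (hy : c y < hi y)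
    (hext : ∀ w, w ≠ x → w ≠ y → IsAtBound lo hi c w) :
    ∃ c', R c' ∧ MovesMass c c' x y ∧ (c' x = lo x ∨ c' y = hi y) := by
  induction hn : c x using Nat.strong_induction_on generalizing c with
  | _ n ih =>
    obtain ⟨c', hc', hmove⟩ := h.exists_move hc hxy hx hy hext
    by_cases hsat : c' x = lo x ∨ c' y = hi y
    · exact ⟨c', hc', hmove, hsat⟩
    · rw [not_or] at hsat
      obtain ⟨c'', hc'', hmove', hsat'⟩ := ih _ (hn ▸ hmove.2) hc'
        ((h.lo_le hc' x).lt_of_ne' hsat.1) ((h.le_hi hc' y).lt_of_ne hsat.2)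
        (fun w hwx hwy => hmove.isAtBound hwx hwy (hext w hwx hwy)) rfl
      exact ⟨c'', hc'', hmove.trans hmove', hsat'⟩

/-- The mass to be moved in the next step: the only letter not at a bound, if there is one,
takes part, as giver or receiver; the letter `z` absorbs all imbalances. -/
theorem exists_move_toward (hlo : ∀ σ, lo σ ≤ c σ) (hhi : ∀ σ, c σ ≤ hi σ)
    (hlo' : ∀ σ, lo σ ≤ tgt σ) (hhi' : ∀ σ, tgt σ ≤ hi σ) (hsum : ∑ σ, c σ = ∑ σ, tgt σ)
    (hne : c ≠ tgt) (hz : ∀ σ, σ ≠ z → IsAtBound lo hi tgt σ) {v : A}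
    (hv : ∀ σ, σ ≠ v → IsAtBound lo hi c σ) :
    ∃ x y, x ≠ y ∧ lo x < c x ∧ c y < hi y ∧ (x ≠ z → tgt x < c x) ∧ (y ≠ z → c y < tgt y) ∧
      ∀ w, w ≠ x → w ≠ y → IsAtBound lo hi c w := by
  obtain ⟨X, hX⟩ : ∃ X, tgt X < c X := by
    by_contra! hle
    exact hne (funext fun σ => (Finset.sum_eq_sum_iff_of_le fun i _ => hle i).1 hsum σ
      (Finset.mem_univ σ))
  obtain ⟨Y, hY⟩ : ∃ Y, c Y < tgt Y := by
    by_contra! hle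
    exact hne (funext fun σ => ((Finset.sum_eq_sum_iff_of_le fun i _ => hle i).1 hsum.symm σ
      (Finset.mem_univ σ)).symm)
  have hX' := (hlo' X).trans_lt hX
  have hY' := hY.trans_le (hhi' Y)
  have hXY : X ≠ Y := by rintro rfl; omega
  by_cases hext : IsAtBound lo hi c v
  · have hall (w : A) : IsAtBound lo hi c w := by
      by_cases hw : w = v
      exacts [hw ▸ hext, hv w hw]
    exact ⟨X, Y, hXY, hX', hY', fun _ => hX, fun _ => hY, fun w _ _ => hall w⟩
  obtain ⟨hvlo, hvhi⟩ := not_or.1 hext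
  have hvlo' := (hlo v).lt_of_ne' hvlo
  have hvhi' := (hhi v).lt_of_ne hvhi
  by_cases hle : c v < tgt v ∨ v = z ∧ X ≠ v
  · exact ⟨X, v, by rintro rfl; exact hle.elim hX.not_gt fun h => h.2 rfl, hX', hvhi', fun _ => hX,
      fun hvz => hle.resolve_right fun h => hvz h.1, fun w _ hw => hv w hw⟩
  · refine ⟨v, Y, by rintro rfl; exact hle (.inl hY), hvlo', hY', fun hvz => ?_, fun _ => hY,
      fun w hw _ => hv w hw⟩
    refine (not_lt.1 fun h => hle (.inl h)).lt_of_ne fun heq => ?_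
    have := hz v hvz
    rw [IsAtBound, heq] at this
    exact hext this

/-- The distance to the target, measured away from the letter absorbing all imbalances. -/
noncomputable def massDist (z : A) (c tgt : A → ℕ) : ℕ :=
  ∑ σ ∈ Finset.univ.erase z, Nat.dist (c σ) (tgt σ)

theorem MovesMass.massDist_lt (hmove : MovesMass c c' x y) (hxy : x ≠ y)
    (hx : x ≠ z → Nat.dist (c' x) (tgt x) < Nat.dist (c x) (tgt x))
    (hy : y ≠ z → Nat.dist (c' y) (tgt y) < Nat.dist (c y) (tgt y)) :
    massDist z c' tgt < massDist z c tgt := by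
  refine Finset.sum_lt_sum (fun σ hσ => ?_) ?_
  · have hσz := Finset.ne_of_mem_erase hσ
    by_cases hσx : σ = x
    · exact hσx ▸ (hx (hσx ▸ hσz)).le
    by_cases hσy : σ = y
    · exact hσy ▸ (hy (hσy ▸ hσz)).le
    rw [hmove.1 σ hσx hσy]
  · by_cases hxz : x = z
    · have hyz : y ≠ z := fun h => hxy (hxz.trans h.symm)
      exact ⟨y, Finset.mem_erase.2 ⟨hyz, Finset.mem_univ y⟩, hy hyz⟩
    · exact ⟨x, Finset.mem_erase.2 ⟨hxz, Finset.mem_univ x⟩, hx hxz⟩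

theorem MassTransferable.reaches (h : MassTransferable lo hi N R) (hlo : ∀ σ, lo σ ≤ tgt σ)
    (hhi : ∀ σ, tgt σ ≤ hi σ) (hN : ∑ σ, tgt σ = N) (hz : ∀ σ, σ ≠ z → IsAtBound lo hi tgt σ)
    (hc : R c) (hv : ∃ v, ∀ σ, σ ≠ v → IsAtBound lo hi c σ) : R tgt := by
  induction hn : massDist z c tgt using Nat.strong_induction_on generalizing c with
  | _ n ih =>
    by_cases heq : c = tgt
    · exact heq ▸ hc
    obtain ⟨v, hv⟩ := hv
    obtain ⟨x, y, hxy, hx, hy, hxt, hyt, hext⟩ := exists_move_toward (h.lo_le hc) (h.le_hi hc)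
      hlo hhi ((h.sum_eq hc).trans hN.symm) heq hz hv
    obtain ⟨c', hc', hmove, hsat⟩ := h.exists_saturating_move hc hxy hx hy hext
    have hsum := hmove.add_eq_add hxy ((h.sum_eq hc').trans (h.sum_eq hc).symm)
    have hlt : massDist z c' tgt < n := hn ▸ hmove.massDist_lt hxy
      (fun hxz => by
        have hx1 := hxt hxz
        have hx2 := h.le_hi hc x
        have hx3 := h.lo_le hc' x
        have hx4 := hmove.2
        rcases hz x hxz with heq | heq <;> simp only [Nat.dist] <;> omega)
      fun hyz => by
        have hy1 := hyt hyz
        have hy2 := h.lo_le hc y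
        have hy3 := h.le_hi hc' y
        have hy4 := hmove.2
        rcases hz y hyz with heq | heq <;> simp only [Nat.dist] <;> omega
    exact ih _ hlt hc' (hmove.exists_forall_ne_isAtBound hsat hext) rfl

end Redistribution

section Reachability

variable {A : Type*} {m : A → ℕ} {s s' : ℤ → A} {ρ : A → ℤ} {x y σ : A} {M : ℕ} {c : A → ℕ}

/-- The least number of occurrences of a letter of a uniform string of period `2 ^ M`. -/
def minCount (M : ℕ) (m : A → ℕ) (σ : A) : ℕ := 2 ^ (M - (m σ + 1))

/-- The largest number of occurrences of a letter of a uniform string of period `2 ^ M`. -/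
def maxCount (M : ℕ) (m : A → ℕ) (σ : A) : ℕ := 2 ^ (M - m σ)

theorem IsBase.isBinary_of_isAtBound (h : IsBase m s ρ) (hs : Periodic s (2 ^ M))
    (hM : m σ + 1 ≤ M) (hc : IsAtBound (minCount M m) (maxCount M m) (letterCount (2 ^ M) s) σ) :
    IsBinary m s σ :=
  hc.symm.imp
    (fun hc => occupiesClass_of_eq_iff ((h σ).eq_iff_of_letterCount_eq_max hs (by omega) hc))
    fun hc => occupiesClass_of_eq_iff ((h σ).eq_iff_of_letterCount_eq_min hs hM hc)

theorem IsBase.transferable_of_isAtBound (h : IsBase m s ρ) (hs : Periodic s (2 ^ M))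
    (hM : ∀ σ, m σ + 1 ≤ M) (hxy : x ≠ y) (hx : minCount M m x < letterCount (2 ^ M) s x)
    (hy : letterCount (2 ^ M) s y < maxCount M m y)
    (hext : ∀ w, w ≠ x → w ≠ y →
      IsAtBound (minCount M m) (maxCount M m) (letterCount (2 ^ M) s) w) :
    Transferable m (2 ^ M) s x y := by
  obtain ⟨u, rfl, hu⟩ := exists_isExtra_of_lt_letterCount (ρ := ρ) (hM x) hx
  obtain ⟨q, hq, hqy⟩ := exists_modEq_of_letterCount_lt (u := ρ y) ((m y).le_succ.trans (hM y)) hy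
  exact h.transferable_of_isBinary hs (by positivity) (fun σ => pow_dvd_pow 2 (hM σ))
    (fun w hwx hwy => h.isBinary_of_isAtBound hs (hM w) (hext w hwx hwy)) hu hxy hq hqy

/-- The letter counts `c` occur in a uniform string connected to `s`. -/
def IsReachableCount (m : A → ℕ) (M : ℕ) (s : ℤ → A) (c : A → ℕ) : Prop :=
  ∃ s' ρ', IsBase m s' ρ' ∧ Periodic s' (2 ^ M) ∧ Connected m s s' ∧ letterCount (2 ^ M) s' = c

theorem IsReachableCount.exists_movesMass (hM : ∀ σ, m σ + 1 ≤ M)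
    (hc : IsReachableCount m M s c) (hxy : x ≠ y) (hx : minCount M m x < c x)
    (hy : c y < maxCount M m y)
    (hext : ∀ w, w ≠ x → w ≠ y → IsAtBound (minCount M m) (maxCount M m) c w) :
    ∃ c', IsReachableCount m M s c' ∧ MovesMass c c' x y := by
  obtain ⟨s', ρ', hbase, hs', hconn, rfl⟩ := hc
  obtain ⟨s'', ρ'', hbase', hs'', hconn', htrans⟩ :=
    hbase.transferable_of_isAtBound hs' hM hxy hx hy hext
  have hpos : (0 : ℤ) < 2 ^ M := by positivity
  have hpow (σ : A) : (2 : ℤ) ^ (m σ + 1) ≤ 2 ^ M := pow_le_pow_right₀ one_le_two (hM σ)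
  exact ⟨_, ⟨s'', ρ'', hbase', hs'', hconn.trans hpow hs' hs'' hconn', rfl⟩,
    fun w => htrans.letterCount_eq hpos hs'', htrans.letterCount_lt hpos hs' hs'' hxy⟩

theorem massTransferable_isReachableCount [Fintype A] (hM : ∀ σ, m σ + 1 ≤ M) (s : ℤ → A) :
    MassTransferable (minCount M m) (maxCount M m) (2 ^ M) (IsReachableCount m M s) where
  lo_le := by
    rintro _ ⟨s', ρ', hbase, -, -, rfl⟩ σ
    exact (hbase σ).le_letterCount (hM σ)
  le_hi := by
    rintro _ ⟨s', ρ', hbase, -, -, rfl⟩ σ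
    exact (hbase σ).letterCount_le ((m σ).le_succ.trans (hM σ))
  sum_eq := by
    rintro _ ⟨s', ρ', -, -, -, rfl⟩
    rw [sum_letterCount]
    exact_mod_cast Int.toNat_natCast (2 ^ M)
  exists_move := fun _ hc _ _ => hc.exists_movesMass hM

theorem IsBase.isReachableCount [Fintype A] (h : IsBase m s ρ) (hs : Periodic s (2 ^ M))
    (hM : ∀ σ, m σ + 1 ≤ M)
    (hv : ∃ v, ∀ σ, σ ≠ v → IsAtBound (minCount M m) (maxCount M m) (letterCount (2 ^ M) s) σ)
    (hlo : ∀ σ, minCount M m σ ≤ c σ) (hhi : ∀ σ, c σ ≤ maxCount M m σ) (hN : ∑ σ, c σ = 2 ^ M)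
    (hz : ∃ z, ∀ σ, σ ≠ z → IsAtBound (minCount M m) (maxCount M m) c σ) :
    IsReachableCount m M s c :=
  hz.elim fun _ hz => (massTransferable_isReachableCount hM s).reaches hlo hhi hN hz
    ⟨s, ρ, h, hs, h.connected h, rfl⟩ hv

end Reachability

section Windows

variable {A : Type*} {k L N j : ℕ} {V V' S : ℤ → A} {σ : A} {F : Frame A}

namespace PStr

/-- The finite string on `{1, …, L}` read off from a bi-infinite string. -/
def window (L : ℕ) (V : ℤ → A) : PStr A := fun i => if 1 ≤ i ∧ i ≤ L then some (V i) else none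

theorem window_eq_some_iff {i : ℕ} : window L V i = some σ ↔ (1 ≤ i ∧ i ≤ L) ∧ V i = σ := by
  unfold window
  split_ifs with h <;> simp [h]

theorem dom_window (L : ℕ) (V : ℤ → A) : (window L V).dom = Set.Icc 1 L := by
  ext i
  simp only [dom, window, Set.mem_ofPred_eq, Set.mem_Icc]
  split_ifs with h <;> simp [h]

theorem window_congr (h : ∀ i : ℕ, 1 ≤ i → i ≤ L → V i = V' i) : window L V = window L V' := by
  funext i
  unfold window
  split_ifs with hi
  exacts [congrArg some (h i hi.1 hi.2), rfl]

theorem exists_eq_window {s : PStr A} (hL : 0 < L) (h : s.dom = Set.Icc 1 L) :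
    ∃ S : ℤ → A, Periodic S L ∧ s = window L S := by
  have hP : (0 : ℤ) < L := by exact_mod_cast hL
  have hsome : ∀ t : ℤ, ∃ σ, s (toIocMod hP 0 t).toNat = some σ := fun t => by
    have hmem := Finset.mem_Ioc.1 (toIocMod_mem_Ioc_zero hP t)
    have : (toIocMod hP 0 t).toNat ∈ s.dom := h ▸ ⟨by omega, by omega⟩
    exact Option.isSome_iff_exists.1 this
  choose S hS using hsome
  refine ⟨S, fun t => Option.some_injective _ ?_, funext fun i => ?_⟩
  · rw [← hS, ← hS, toIocMod_add_right]
  · unfold window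
    split_ifs with hi
    · have hmod : toIocMod hP 0 (i : ℤ) = i := (toIocMod_eq_self hP).2 ⟨by omega, by omega⟩
      rw [← hS, hmod, Int.toNat_natCast]
    · exact Option.not_isSome_iff_eq_none.1 fun hsome => hi (h ▸ hsome : i ∈ Set.Icc 1 L)

theorem ncard_window (L : ℕ) (V : ℤ → A) (σ : A) :
    {i | window L V i = some σ}.ncard = letterCount L V σ := by
  rw [← Set.ncard_image_of_injective _ (Nat.cast_injective (R := ℤ)), letterCount, periodCount,
    ← Set.ncard_coe_finset]
  congr 1
  ext t
  simp only [Set.mem_image, Set.mem_ofPred_eq, window_eq_some_iff, Finset.coe_filter,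
    Finset.mem_Ioc]
  constructor
  · rintro ⟨i, ⟨⟨h₁, h₂⟩, hi⟩, rfl⟩
    exact ⟨⟨by omega, by omega⟩, hi⟩
  · rintro ⟨⟨h₁, h₂⟩, ht⟩
    have hcast : (t.toNat : ℤ) = t := Int.toNat_of_nonneg h₁.le
    exact ⟨t.toNat, ⟨⟨by omega, by omega⟩, by rwa [hcast]⟩, hcast⟩

theorem exists_window_eq_some (h : GapBounded k σ V) {x : ℕ} (hx : x + 2 ^ (k + 1) ≤ L) :
    ∃ i, x < i ∧ i ≤ x + 2 ^ (k + 1) ∧ window L V i = some σ := by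
  obtain ⟨t, ⟨h₁, h₂⟩, ht⟩ := h.exists_mem_Ico (x + 1)
  lift t to ℕ using by omega
  have hle : t ≤ x + 2 ^ (k + 1) := by
    have : (t : ℤ) ≤ x + 2 ^ (k + 1) := by linarith
    exact_mod_cast this
  exact ⟨t, by omega, hle, window_eq_some_iff.2 ⟨⟨by omega, by omega⟩, ht⟩⟩

theorem chars_window {m : A → ℕ} (h : ∀ σ, GapBounded (m σ) σ V) (hL : ∀ σ, 2 ^ (m σ + 1) ≤ L) :
    (window L V).chars = Set.univ :=
  Set.eq_univ_of_forall fun σ => by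
    obtain ⟨i, -, -, hi⟩ := exists_window_eq_some (h σ) (x := 0) (by simpa using hL σ)
    exact ⟨i, hi⟩

theorem le_minGap_window (h : GapBounded k σ V) (L : ℕ) :
    (2 ^ k : ℕ∞) ≤ (window L V).minGap σ := by
  refine le_sInf ?_
  rintro _ ⟨g, ⟨hg, x, hx, hxg⟩, rfl⟩
  have hle := h.le_sub (window_eq_some_iff.1 hx).2 (window_eq_some_iff.1 hxg).2 (by omega)
  have : (2 : ℤ) ^ k ≤ g := by push_cast at hle; linarith
  change (2 ^ k : ℕ∞) ≤ (g : ℕ∞)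
  exact_mod_cast this

theorem maxGap_window_le (h : GapBounded k σ V) (L : ℕ) :
    (window L V).maxGap σ ≤ 2 ^ (k + 1) := by
  refine sSup_le ?_
  rintro _ ⟨g, ⟨-, x, hx, hxg, hfree⟩, rfl⟩
  rw [dom_window] at hx hxg hfree
  change (g : ℕ∞) ≤ 2 ^ (k + 1)
  norm_cast
  by_contra! hlt
  obtain ⟨i, hxi, hi, hiσ⟩ := exists_window_eq_some h (x := x) (L := L) (by linarith [hxg.2])
  exact hfree i (window_eq_some_iff.1 hiσ).1 hxi (by omega) hiσ

theorem minGap_le_maxGap {s : PStr A} {x y : ℕ} (hxy : x < y) (hx : s x = some σ)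
    (hy : s y = some σ) : s.minGap σ ≤ s.maxGap σ := by
  have hex : ∃ i, x < i ∧ s i = some σ := ⟨y, hxy, hy⟩
  obtain ⟨hlt, hsome⟩ := Nat.find_spec hex
  have hadd : x + (Nat.find hex - x) = Nat.find hex := by omega
  have hdom : ∀ {i}, s i = some σ → i ∈ s.dom := fun h => Option.isSome_iff_exists.2 ⟨σ, h⟩
  calc s.minGap σ ≤ ((Nat.find hex - x : ℕ) : ℕ∞) :=
        sInf_le ⟨_, ⟨by omega, x, hx, hadd.symm ▸ hsome⟩, rfl⟩
    _ ≤ s.maxGap σ := le_sSup ⟨_, ⟨by omega, x, hdom hx, hadd.symm ▸ hdom hsome,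
        fun i _ hxi hi hiσ => Nat.find_min hex (by omega) ⟨hxi, hiσ⟩⟩, rfl⟩

theorem locallyCompatible_window {m : A → ℕ} (hm : F.val = fun σ => m σ + 1)
    (h : ∀ σ, GapBounded (m σ) σ V) (hL : ∀ σ, 2 ^ (m σ + 2) ≤ L) :
    (window L V).LocallyCompatible F := fun σ _ _ => by
  have hL' : 2 ^ (m σ + 1) + 2 ^ (m σ + 1) ≤ L := by
    have := hL σ
    rw [pow_succ] at this
    omega
  obtain ⟨x, -, hx, hxσ⟩ := exists_window_eq_some (h σ) (x := 0) (L := L) (by omega)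
  obtain ⟨y, hxy, -, hyσ⟩ := exists_window_eq_some (h σ) (x := x) (L := L) (by omega)
  rw [hm]
  exact ⟨le_minGap_window (h σ) L, minGap_le_maxGap hxy hxσ hyσ, maxGap_window_le (h σ) L⟩

theorem maxn_window (F : Frame A) (k : ℕ) (V : ℤ → A) :
    (window ((k + 1) * 2 ^ F.M) V).maxn F = k + 1 := by
  have hP : 0 < 2 ^ F.M := by positivity
  have hk : 1 ≤ (k + 1) * 2 ^ F.M := Nat.mul_pos k.succ_pos hP
  rw [maxn, dom_window, csSup_Icc hk, Nat.add_sub_assoc Nat.one_le_two_pow, add_comm,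
    Nat.add_mul_div_right _ _ hP, Nat.div_eq_of_lt (Nat.sub_lt hP one_pos), zero_add]

theorem shift_window (hL : (k + 1) * 2 ^ F.M ≤ L) (V : ℤ → A) :
    (window L V).shift F (k + 1) = window (2 ^ F.M) fun t => V (t + k * 2 ^ F.M) := by
  rw [add_one_mul] at hL
  funext i
  unfold shift window
  by_cases hi : 1 ≤ i ∧ i ≤ 2 ^ F.M
  · rw [if_pos hi, if_pos hi, Nat.add_sub_cancel, if_pos ⟨by omega, by omega⟩]
    push_cast
    rfl
  · rw [if_neg hi, if_neg hi]

theorem exists_strArrow_window {m : A → ℕ} (hm : F.val = fun σ => m σ + 1)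
    (hM : ∀ σ, m σ + 2 ≤ F.M) {S S' : ℤ → A} (hS : Periodic S (2 ^ F.M))
    (hS' : Periodic S' (2 ^ F.M)) (hgap : ∀ σ, GapBounded (m σ) σ S)
    (hgap' : ∀ σ, GapBounded (m σ) σ S') (h : Connected m S S') :
    ∃ k : ℕ, 1 ≤ k ∧ ∃ t : PStr A, t.dom = Set.Icc 1 (k * 2 ^ F.M) ∧
      StrArrow F (window (2 ^ F.M) S) (window (2 ^ F.M) S') t := by
  obtain ⟨W, hW, hfirst, hlast⟩ := h.exists_eq_of_lt (by positivity) hS hS' (2 ^ F.M + 1)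
  obtain ⟨b, hb⟩ := eventually_atTop.1 hlast
  have hP : 1 ≤ 2 ^ F.M := Nat.one_le_two_pow
  have hmP : ∀ σ, 2 ^ (m σ + 1) ≤ 2 ^ F.M := fun σ =>
    pow_le_pow_right₀ one_le_two ((Nat.le_succ _).trans (hM σ))
  have hPL : 2 ^ F.M ≤ (b.toNat + 1) * 2 ^ F.M := Nat.le_mul_of_pos_left _ (Nat.succ_pos _)
  refine ⟨b.toNat + 1, Nat.succ_pos _, window ((b.toNat + 1) * 2 ^ F.M) W, dom_window _ _, ?_, ?_,
    locallyCompatible_window hm hW fun σ => (pow_le_pow_right₀ one_le_two (hM σ)).trans hPL, ?_, ?_⟩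
  · rw [chars_window hW fun σ => (hmP σ).trans hPL, chars_window hgap hmP]
  · rw [chars_window hgap hmP, chars_window hgap' hmP]
  · rw [shift_window (k := 0) (by simp)]
    refine window_congr fun i _ hi => ?_
    have hi' : (i : ℤ) ≤ 2 ^ F.M := by exact_mod_cast hi
    simpa using hfirst i (Int.lt_add_one_of_le hi')
  · rw [maxn_window, shift_window le_rfl]
    refine window_congr fun i _ _ => ?_
    have hbi : b ≤ i + b.toNat * 2 ^ F.M := by
      have := Int.self_le_toNat b
      have : (1 : ℤ) ≤ 2 ^ F.M := by exact_mod_cast hP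
      nlinarith [Int.natCast_nonneg i, Int.natCast_nonneg b.toNat]
    exact (hb _ hbi).trans (by simpa using hS'.nat_mul b.toNat i)

end PStr

/-- The part in `{1, …, 2 ^ N}` of the class of `r` modulo `2 ^ j`. -/
def classInWindow (N j : ℕ) (r : ℤ) : Set ℕ := {i | (1 ≤ i ∧ i ≤ 2 ^ N) ∧ i ≡ r [ZMOD 2 ^ j]}

theorem exists_natCast_modEq (N : ℕ) (t : ℤ) :
    ∃ i : ℕ, (1 ≤ i ∧ i ≤ 2 ^ N) ∧ i ≡ t [ZMOD 2 ^ N] := by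
  obtain ⟨i, ⟨h₁, h₂⟩, hmod⟩ := exists_modEq_mem_Ico (n := 2 ^ N) (by positivity) t 1
  lift i to ℕ using by omega
  have : (i : ℤ) ≤ 2 ^ N := by linarith
  exact ⟨i, ⟨by omega, by exact_mod_cast this⟩, hmod⟩

theorem apply_eq_of_modEq {P a b : ℤ} (hS : Periodic S P) (h : a ≡ b [ZMOD P]) : S a = S b := by
  obtain ⟨c, hc⟩ := h.symm.dvd
  rw [sub_eq_iff_eq_add'.1 hc, mul_comm]
  exact hS.int_mul c b

theorem setOf_exists_eq_classInWindow {r : ℕ} (hj : j ≤ N) (hr : 1 ≤ r) (hrj : r ≤ 2 ^ j) :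
    {x | ∃ m : ℕ, m < 2 ^ N / 2 ^ j ∧ x = r + m * 2 ^ j} = classInWindow N j r := by
  have hdvd : 2 ^ j ∣ 2 ^ N := pow_dvd_pow 2 hj
  ext i
  constructor
  · rintro ⟨m, hm, rfl⟩
    have hle : (m + 1) * 2 ^ j ≤ 2 ^ N :=
      (Nat.mul_le_mul_right _ hm).trans (Nat.div_mul_cancel hdvd).le
    exact ⟨⟨by omega, by linarith⟩, by simp [Int.ModEq]⟩
  · rintro ⟨⟨hi, hiN⟩, hmod⟩
    have hri : r ≤ i := not_lt.1 fun hlt => by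
      have h := add_le_of_modEq_of_lt hmod (by exact_mod_cast hlt)
      have : i + 2 ^ j ≤ r := by exact_mod_cast h
      omega
    have hmod' : i ≡ r [MOD 2 ^ j] := by
      rw [← Int.natCast_modEq_iff]
      exact_mod_cast hmod
    obtain ⟨m, hm⟩ := (Nat.modEq_iff_dvd' hri).1 hmod'.symm
    have him : i = r + m * 2 ^ j := by rw [mul_comm]; omega
    exact ⟨m, (Nat.lt_div_iff_mul_lt_of_dvd (by positivity) hdvd).2 (by omega), him⟩

theorem isSatAP_iff {J : Set ℕ} (hj : j ≤ N) :
    IsSatAP N J (2 ^ j) ↔ ∃ r : ℤ, J = classInWindow N j r := by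
  constructor
  · rintro ⟨-, r, hr, hrj, rfl⟩
    exact ⟨r, setOf_exists_eq_classInWindow hj hr hrj⟩
  · rintro ⟨t, rfl⟩
    obtain ⟨r, ⟨hr, hrj⟩, hmod⟩ := exists_natCast_modEq j t
    refine ⟨⟨j, hj, rfl⟩, r, hr, hrj, ?_⟩
    rw [setOf_exists_eq_classInWindow hj hr hrj]
    ext i
    exact and_congr_right fun _ => ⟨fun h => h.trans hmod.symm, fun h => h.trans hmod⟩

theorem exists_sandwiched_of_isSatAP {J₁ J₂ : Set ℕ} (hS : Periodic S (2 ^ N)) (hk : k + 1 ≤ N)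
    (h₁ : IsSatAP N J₁ (2 ^ (k + 1))) (h₂ : IsSatAP N J₂ (2 ^ k))
    (hsub₁ : J₁ ⊆ {i | PStr.window (2 ^ N) S i = some σ})
    (hsub₂ : {i | PStr.window (2 ^ N) S i = some σ} ⊆ J₂) : ∃ r, Sandwiched k σ S r := by
  obtain ⟨r, rfl⟩ := (isSatAP_iff hk).1 h₁
  obtain ⟨r', rfl⟩ := (isSatAP_iff (by omega)).1 h₂
  have heq : ∀ t, t ≡ r [ZMOD 2 ^ (k + 1)] → S t = σ := fun t ht => by
    obtain ⟨i, hi, hit⟩ := exists_natCast_modEq N t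
    exact apply_eq_of_modEq hS hit ▸ (PStr.window_eq_some_iff.1
      (hsub₁ ⟨hi, (modEq_two_pow_of_le hit hk).trans ht⟩)).2
  have hmod : ∀ t, S t = σ → t ≡ r' [ZMOD 2 ^ k] := fun t ht => by
    obtain ⟨i, hi, hit⟩ := exists_natCast_modEq N t
    exact (modEq_two_pow_of_le hit (by omega)).symm.trans
      (hsub₂ (PStr.window_eq_some_iff.2 ⟨hi, (apply_eq_of_modEq hS hit).trans ht⟩)).2
  exact ⟨r, fun t => heq t, fun t ht => (hmod t ht).trans (hmod r (heq r rfl)).symm⟩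

theorem exists_isBase_of_uniform [Fintype A] {m : A → ℕ} {p : A → ℝ} {s : PStr A}
    (hsupp : F.supp = Finset.univ) (hm : F.val = fun σ => m σ + 1) (hM : ∀ σ, m σ + 1 ≤ F.M)
    (h : s.Uniform F p) :
    ∃ S ρ, s = PStr.window (2 ^ F.M) S ∧ Periodic S (2 ^ F.M) ∧ IsBase m S ρ ∧
      ∀ σ, (letterCount (2 ^ F.M) S σ : ℝ) = p σ * 2 ^ F.M := by
  obtain ⟨hdom, hcount, hsat⟩ := h
  obtain ⟨S, hS, rfl⟩ := PStr.exists_eq_window (by positivity) hdom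
  push_cast at hS
  have hbase : ∀ σ, ∃ r, Sandwiched (m σ) σ S r := fun σ => by
    obtain ⟨J₁, J₂, h₁, h₂, hsub₁, hsub₂⟩ := hsat σ (hsupp ▸ Finset.mem_univ σ)
    rw [hm] at h₁ h₂
    exact exists_sandwiched_of_isSatAP hS (hM σ) h₁ h₂ hsub₁ hsub₂
  choose ρ hρ using hbase
  refine ⟨S, ρ, rfl, hS, hρ, fun σ => ?_⟩
  rw [← hcount, PStr.ncard_window]
  push_cast
  rfl

theorem uniform_window [Fintype A] {m : A → ℕ} {ρ : A → ℤ} {p : A → ℝ}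
    (hm : F.val = fun σ => m σ + 1) (hM : ∀ σ, m σ + 1 ≤ F.M) (hbase : IsBase m S ρ)
    (hcount : ∀ σ, (letterCount (2 ^ F.M) S σ : ℝ) = p σ * 2 ^ F.M) :
    (PStr.window (2 ^ F.M) S).Uniform F p := by
  refine ⟨PStr.dom_window _ _, fun σ => ?_, fun σ _ => ?_⟩
  · rw [← hcount, PStr.ncard_window]
    push_cast
    rfl
  · rw [hm]
    refine ⟨classInWindow F.M (m σ + 1) (ρ σ), classInWindow F.M (m σ) (ρ σ),
      (isSatAP_iff (hM σ)).2 ⟨_, rfl⟩, (isSatAP_iff ((m σ).le_succ.trans (hM σ))).2 ⟨_, rfl⟩,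
      ?_, ?_⟩
    · exact fun i hi => PStr.window_eq_some_iff.2 ⟨hi.1, (hbase σ).eq_of_modEq hi.2⟩
    · intro i hi
      obtain ⟨hiN, hiσ⟩ := PStr.window_eq_some_iff.1 hi
      exact ⟨hiN, (hbase σ).modEq_of_eq hiσ⟩

end Windows

section Densities

variable {A : Type*} {m : A → ℕ} {M : ℕ} {c : A → ℕ} {σ : A} {p : A → ℝ}

theorem two_zpow_neg_mul_two_pow {k : ℕ} (h : k ≤ M) :
    (2 : ℝ) ^ (-(k : ℤ)) * 2 ^ M = ((2 ^ (M - k) : ℕ) : ℝ) := by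
  push_cast
  rw [pow_sub₀ _ two_ne_zero h, zpow_neg, zpow_natCast, mul_comm]

theorem natCast_minCount (h : m σ + 1 ≤ M) :
    (minCount M m σ : ℝ) = 2 ^ (-((m σ + 1 : ℕ) : ℤ)) * 2 ^ M :=
  (two_zpow_neg_mul_two_pow h).symm

theorem natCast_maxCount (h : m σ + 1 ≤ M) :
    (maxCount M m σ : ℝ) = 2 ^ (-(((m σ + 1 : ℕ) : ℤ) - 1)) * 2 ^ M := by
  rw [maxCount, ← two_zpow_neg_mul_two_pow (Nat.le_of_succ_le h)]
  push_cast
  rw [add_sub_cancel_right]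

theorem BinaryVal.exists_natCast_eq {x : ℝ} (hM : m σ + 1 ≤ M)
    (h : BinaryVal (fun σ => m σ + 1) σ x) : ∃ k : ℕ, (k : ℝ) = x * 2 ^ M := by
  rcases h with rfl | rfl
  exacts [⟨_, natCast_minCount hM⟩, ⟨_, natCast_maxCount hM⟩]

theorem BinaryVal.isAtBound {x : ℝ} (hM : m σ + 1 ≤ M) (hc : (c σ : ℝ) = x * 2 ^ M)
    (h : BinaryVal (fun σ => m σ + 1) σ x) : IsAtBound (minCount M m) (maxCount M m) c σ := by
  rcases h with rfl | rfl
  · exact .inl (by exact_mod_cast hc.trans (natCast_minCount hM).symm)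
  · exact .inr (by exact_mod_cast hc.trans (natCast_maxCount hM).symm)

theorem exists_natCast_eq_of_sum_eq {ι : Type*} [Fintype ι] {f : ι → ℝ} {z : ι} {N : ℕ}
    (hz : 0 ≤ f z) (hf : ∀ i ≠ z, ∃ k : ℕ, (k : ℝ) = f i) (hsum : ∑ i, f i = N) (i : ι) :
    ∃ k : ℕ, (k : ℝ) = f i := by
  rcases eq_or_ne i z with rfl | hi
  · choose! k hk using hf
    have hfi : f i = N - ((∑ l ∈ Finset.univ.erase i, k l : ℕ) : ℝ) := by
      rw [eq_sub_iff_add_eq, ← hsum, ← Finset.add_sum_erase _ _ (Finset.mem_univ i), Nat.cast_sum]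
      exact congrArg _ (Finset.sum_congr rfl fun l hl => hk l (Finset.ne_of_mem_erase hl))
    rw [hfi, sub_nonneg, Nat.cast_le] at hz
    exact ⟨_, (Nat.cast_sub hz).trans hfi.symm⟩
  · exact hf i hi

variable [Fintype A]

theorem exists_forall_ne_binaryVal [Nonempty A] {n : A → ℕ} (hp : p ∈ PBA n) :
    ∃ z, ∀ σ ≠ z, BinaryVal n σ (p σ) := by
  by_cases! h : ∃ z, ¬ BinaryVal n z (p z)
  · obtain ⟨z, hz⟩ := h
    exact ⟨z, fun σ hσ => by_contra fun hc => hσ (hp.2 σ z hc hz)⟩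
  · exact ⟨Classical.arbitrary A, fun σ _ => h σ⟩

theorem exists_count_of_mem_PBA [Nonempty A] (hM : ∀ σ, m σ + 1 ≤ M)
    (hp : p ∈ PBA fun σ => m σ + 1) : ∃ c : A → ℕ, ∀ σ, (c σ : ℝ) = p σ * 2 ^ M := by
  obtain ⟨z, hz⟩ := exists_forall_ne_binaryVal hp
  refine Classical.skolem.1 (exists_natCast_eq_of_sum_eq (z := z) (N := 2 ^ M) ?_
    (fun σ hσ => (hz σ hσ).exists_natCast_eq (hM σ)) ?_)
  · exact mul_nonneg (hp.1.1.1 z) (by positivity)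
  · rw [← Finset.sum_mul, hp.1.1.2, one_mul, Nat.cast_pow, Nat.cast_ofNat]

theorem exists_forall_ne_isAtBound [Nonempty A] (hM : ∀ σ, m σ + 1 ≤ M)
    (hp : p ∈ PBA fun σ => m σ + 1) (hc : ∀ σ, (c σ : ℝ) = p σ * 2 ^ M) :
    ∃ z, ∀ σ ≠ z, IsAtBound (minCount M m) (maxCount M m) c σ :=
  (exists_forall_ne_binaryVal hp).imp fun _ hz σ hσ => (hz σ hσ).isAtBound (hM σ) (hc σ)

theorem minCount_le_of_mem_PiN (hM : m σ + 1 ≤ M) (hp : p ∈ PiN fun σ => m σ + 1)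
    (hc : (c σ : ℝ) = p σ * 2 ^ M) : minCount M m σ ≤ c σ := by
  rw [← Nat.cast_le (α := ℝ), hc, natCast_minCount hM]
  exact mul_le_mul_of_nonneg_right (hp.2 σ).1 (by positivity)

theorem le_maxCount_of_mem_PiN (hM : m σ + 1 ≤ M) (hp : p ∈ PiN fun σ => m σ + 1)
    (hc : (c σ : ℝ) = p σ * 2 ^ M) : c σ ≤ maxCount M m σ := by
  rw [← Nat.cast_le (α := ℝ), hc, natCast_maxCount hM]
  exact mul_le_mul_of_nonneg_right (hp.2 σ).2 (by positivity)

theorem sum_eq_two_pow_of_isProbDist (hp : IsProbDist p) (hc : ∀ σ, (c σ : ℝ) = p σ * 2 ^ M) :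
    ∑ σ, c σ = 2 ^ M := by
  have h : ∑ σ, (c σ : ℝ) = 2 ^ M := by
    rw [Finset.sum_congr rfl fun σ _ => hc σ, ← Finset.sum_mul, hp.2, one_mul]
  exact_mod_cast h

theorem IsBase.exists_connected_of_mem_PBA [Nonempty A] {s : ℤ → A} {ρ : A → ℤ} {p' : A → ℝ}
    (h : IsBase m s ρ) (hs : Periodic s (2 ^ M)) (hM : ∀ σ, m σ + 1 ≤ M)
    (hp : p ∈ PBA fun σ => m σ + 1) (hp' : p' ∈ PBA fun σ => m σ + 1)
    (hcount : ∀ σ, (letterCount (2 ^ M) s σ : ℝ) = p σ * 2 ^ M) :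
    ∃ s' ρ', IsBase m s' ρ' ∧ Periodic s' (2 ^ M) ∧ Connected m s s' ∧
      ∀ σ, (letterCount (2 ^ M) s' σ : ℝ) = p' σ * 2 ^ M := by
  obtain ⟨c, hc⟩ := exists_count_of_mem_PBA hM hp'
  obtain ⟨s', ρ', hbase, hs', hconn, rfl⟩ := h.isReachableCount (c := c) hs hM
    (exists_forall_ne_isAtBound hM hp hcount)
    (fun σ => minCount_le_of_mem_PiN (hM σ) hp'.1 (hc σ))
    (fun σ => le_maxCount_of_mem_PiN (hM σ) hp'.1 (hc σ))
    (sum_eq_two_pow_of_isProbDist hp'.1.1 hc) (exists_forall_ne_isAtBound hM hp' hc)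
  exact ⟨s', ρ', hbase, hs', hconn, hc⟩

theorem exists_val_eq_add_one {F : Frame A} (hsupp : F.supp = Finset.univ) :
    ∃ m : A → ℕ, F.val = (fun σ => m σ + 1) ∧ ∀ σ, m σ + 6 ≤ F.M := by
  have hmem : ∀ σ, σ ∈ F.supp := fun σ => hsupp ▸ Finset.mem_univ σ
  have hval : ∀ σ, F.val σ = F.val σ - 1 + 1 := fun σ =>
    (Nat.sub_add_cancel (F.val_pos σ (hmem σ))).symm
  refine ⟨fun σ => F.val σ - 1, funext hval, fun σ => ?_⟩
  have : F.val σ + 5 ≤ F.M := Finset.le_sup (f := fun σ => F.val σ + 5) (hmem σ)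
  have := hval σ
  dsimp only
  omega

end Densities

/-- **Lemma (connecting uniform strings).** For a finite alphabet `A`, a frame `F` defined on
all of `A`, pseudo-binary approximations `p, p' ∈ PBA_n`, and any `(n,p)`-uniform string `s`,
there exist an `(n,p')`-uniform string `s'`, a `k ≥ 1`, and a connecting string `t` on
`{1,…,k·2^{M_n}}` with `s →_{n,t} s'`. -/
theorem exists_uniform_string_arrow {A : Type*} [Fintype A] (F : Frame A)
    (hsupp : F.supp = Finset.univ) (p p' : A → ℝ)
    (hp : p ∈ PBA F.val) (hp' : p' ∈ PBA F.val)
    (s : PStr A) (hs : s.Uniform F p) :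
    ∃ s' : PStr A, s'.Uniform F p' ∧
      ∃ k : ℕ, 1 ≤ k ∧ ∃ t : PStr A,
        t.dom = Set.Icc 1 (k * 2 ^ F.M) ∧ PStr.StrArrow F s s' t := by
  have : Nonempty A := F.supp_nonempty.to_type
  obtain ⟨m, hm, hM⟩ := exists_val_eq_add_one hsupp
  have hM₁ : ∀ σ, m σ + 1 ≤ F.M := fun σ => by linarith [hM σ]
  have hM₂ : ∀ σ, m σ + 2 ≤ F.M := fun σ => by linarith [hM σ]
  obtain ⟨S, ρ, rfl, hS, hbase, hcount⟩ := exists_isBase_of_uniform hsupp hm hM₁ hs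
  rw [hm] at hp hp'
  obtain ⟨S', ρ', hbase', hS', hconn, hcount'⟩ :=
    hbase.exists_connected_of_mem_PBA hS hM₁ hp hp' hcount
  exact ⟨PStr.window (2 ^ F.M) S', uniform_window hm hM₁ hbase' hcount',
    PStr.exists_strArrow_window hm hM₂ hS hS' (fun σ => (hbase σ).gapBounded)
      (fun σ => (hbase' σ).gapBounded) hconn⟩
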